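/- Let C be a commutative Noetherian ring, ℓ a natural number, I a T-ideal of FreeAlgebra C (Fin ℓ), and let A = FreeAlgebra C (Fin ℓ) / I be the corresponding relatively free affine algebra. Then the T-radical of A (its unique maximal nilpotent T-ideal) is the intersection of finitely many T-prime T-ideals: there exist k ≥ 1 and T-prime T-ideals P_1, …, P_k of A whose intersection P_1 ∩ ⋯ ∩ P_k is a nilpotent T-ideal of A containing every nilpotent T-ideal of A. -/

import Mathlib

/-- A T-ideal of a unital associative `C`-algebra `A` is a two-sided ideal stable under
every `C`-algebra endomorphism of `A`. -/
def IsTIdeal (C : Type*) [CommSemiring C] (A : Type*) [Ring A] [Algebra C A]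
    (I : TwoSidedIdeal A) : Prop :=
  ∀ φ : A →ₐ[C] A, ∀ x ∈ I, φ x ∈ I

/-- A two-sided ideal `N` of `A` is nilpotent if for some `m` every product of `m`
elements of `N` is zero. -/
def IsNilpotentTwoSidedIdeal {A : Type*} [Ring A] (N : TwoSidedIdeal A) : Prop :=
  ∃ m : ℕ, ∀ f : Fin m → A, (∀ i, f i ∈ N) → (List.ofFn f).prod = 0

/-- A T-ideal `P` of `A` is T-prime if whenever the two-sided ideal generated by the
products `{x * y : x ∈ I, y ∈ J}` of two T-ideals `I`, `J` is contained in `P`, then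
`I ⊆ P` or `J ⊆ P`. -/
def IsTPrime (C : Type*) [CommSemiring C] (A : Type*) [Ring A] [Algebra C A]
    (P : TwoSidedIdeal A) : Prop :=
  ∀ I J : TwoSidedIdeal A, IsTIdeal C A I → IsTIdeal C A J →
    TwoSidedIdeal.span {z : A | ∃ x ∈ I, ∃ y ∈ J, z = x * y} ≤ P → I ≤ P ∨ J ≤ P

/-!
Suppose that some finite intersection of prime ideals of `A` is nilpotent. The largest T-ideal
inside a prime ideal is T-prime and contains every nilpotent T-ideal, so these T-ideals prove the
theorem. Primes are then found in `A` by contracting them along homomorphisms that become surjective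
after adjoining central scalars; if such a homomorphism has kernel `K`, it remains to treat the
quotient of `A` by the right annihilator of `K`.

If `A` is finitely generated as an algebra and satisfies a multilinear identity in which the
monomial `x₁ ⋯ x_d` has coefficient `1`, then by Shirshov's height theorem it is a finite `C`-module
as soon as finitely many words in the generators are integral over `C` of degree at most `d + 1`.
Integrality is forced one word `w` at a time. Interlacing powers of `w` turns the identity into the
vanishing at `w` of the Vandermonde polynomial in `d + 1` variables. Adjoin commuting variables `X₁,
…, X_d` and divide by the relations that make `w` a root of `∏ (T - Xᵢ)`: the kernel of `A` in this
extension is annihilated on the right by the values at `w` of the Vandermonde polynomial in `d`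
variables, so in the quotient of `A` by the right annihilator of the kernel the number of variables
has dropped.

A relatively free algebra over a Noetherian ring is reduced to this case by Noetherian induction on
`Module.annihilator C A`. If this ideal is not prime, some `c` yields larger annihilators both for
`A / cA` and for the quotient of `A` by the `c`-torsion. If it is prime, either every coefficient of
every relation annihilates `A`, which is then a free algebra over a domain, or linearizing a
relation gives a multilinear identity with a coefficient `c` that does not annihilate `A`. In that
case `A / cA` has a larger annihilator, and modulo the `c`-torsion the Vandermonde identity can be
divided by `c` and linearized again.
-/

namespace TRadical

section Primes

variable {A : Type*} [Ring A]

/-- Primeness of a two-sided ideal of a noncommutative ring, tested on two-sided ideals. As for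
`IsTPrime`, the unit ideal is allowed. -/
def IsPrimeIdeal (Q : TwoSidedIdeal A) : Prop :=
  ∀ I J : TwoSidedIdeal A, (∀ x ∈ I, ∀ y ∈ J, x * y ∈ Q) → I ≤ Q ∨ J ≤ Q

/-- The ideal `I` contains a power of the intersection of some finite set of prime ideals. -/
def ContainsPrimeInfPow (I : TwoSidedIdeal A) : Prop :=
  ∃ S : Set (TwoSidedIdeal A), S.Finite ∧ (∀ Q ∈ S, IsPrimeIdeal Q) ∧
    ∃ m : ℕ, ∀ l : List A, l.length = m → (∀ x ∈ l, x ∈ sInf S) → l.prod ∈ I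

variable (A) in
/-- Some finite intersection of prime ideals of `A` is nilpotent. -/
def HasNilpotentPrimeInf : Prop := ContainsPrimeInfPow (⊥ : TwoSidedIdeal A)

/-- The two-sided ideal of all `y` with `J y ⊆ I`. -/
def rightColon (I J : TwoSidedIdeal A) : TwoSidedIdeal A :=
  .mk' {y | ∀ x ∈ J, x * y ∈ I}
    (fun x _ ↦ by simp [I.zero_mem])
    (fun hy hz x hx ↦ by simpa only [mul_add] using I.add_mem (hy x hx) (hz x hx))
    (fun hy x hx ↦ by simpa only [mul_neg] using I.neg_mem (hy x hx))
    (fun {a _} hy x hx ↦ by simpa only [mul_assoc] using hy (x * a) (J.mul_mem_right _ _ hx))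
    (fun {_ a} hy x hx ↦ by simpa only [mul_assoc] using I.mul_mem_right _ a (hy x hx))

theorem mem_rightColon {I J : TwoSidedIdeal A} {y : A} :
    y ∈ rightColon I J ↔ ∀ x ∈ J, x * y ∈ I := by
  rw [rightColon, TwoSidedIdeal.mem_mk']
  rfl

theorem mul_mem_of_mem_span {Q : TwoSidedIdeal A} {s t : Set A}
    (h : ∀ x ∈ s, ∀ z, ∀ y ∈ t, x * z * y ∈ Q) {x y : A}
    (hx : x ∈ TwoSidedIdeal.span s) (hy : y ∈ TwoSidedIdeal.span t) : x * y ∈ Q := by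
  have right : ∀ x ∈ s, ∀ z, x * z * y ∈ Q := by
    intro x hx
    induction hy using TwoSidedIdeal.span_induction with
    | mem y hy => exact fun z ↦ h x hx z y hy
    | zero => simp [Q.zero_mem]
    | add y₁ y₂ _ _ h₁ h₂ => exact fun z ↦ by simpa only [mul_add] using Q.add_mem (h₁ z) (h₂ z)
    | neg y _ h => exact fun z ↦ by simpa only [mul_neg] using Q.neg_mem (h z)
    | left_absorb a y _ h => exact fun z ↦ by simpa only [mul_assoc] using h (z * a)
    | right_absorb b y _ h =>
      exact fun z ↦ by simpa only [mul_assoc] using Q.mul_mem_right _ b (h z)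
  suffices ∀ z, x * z * y ∈ Q by simpa using this 1
  induction hx using TwoSidedIdeal.span_induction with
  | mem x hx => exact right x hx
  | zero => simp [Q.zero_mem]
  | add x₁ x₂ _ _ h₁ h₂ => exact fun z ↦ by simpa only [add_mul] using Q.add_mem (h₁ z) (h₂ z)
  | neg x _ h => exact fun z ↦ by simpa only [neg_mul] using Q.neg_mem (h z)
  | left_absorb a x _ h => exact fun z ↦ by simpa only [mul_assoc] using Q.mul_mem_left a _ (h z)
  | right_absorb b x _ h => exact fun z ↦ by simpa only [mul_assoc] using h (b * z)

theorem IsPrimeIdeal.containsPrimeInfPow {Q : TwoSidedIdeal A} (hQ : IsPrimeIdeal Q) :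
    ContainsPrimeInfPow Q := by
  refine ⟨{Q}, Set.finite_singleton Q, by simpa using hQ, 1, fun l hl hlQ ↦ ?_⟩
  obtain ⟨x, rfl⟩ := List.length_eq_one_iff.1 hl
  simpa using hlQ

theorem IsPrimeIdeal.le_of_list_prod_mem {Q : TwoSidedIdeal A} (hQ : IsPrimeIdeal Q)
    {N : TwoSidedIdeal A} {m : ℕ}
    (h : ∀ l : List A, l.length = m → (∀ x ∈ l, x ∈ N) → l.prod ∈ Q) : N ≤ Q := by
  induction m with
  | zero =>
    have one_mem : (1 : A) ∈ Q := h [] rfl (by simp)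
    exact fun x _ ↦ by simpa using Q.mul_mem_left x 1 one_mem
  | succ m ih =>
    refine (hQ N (rightColon Q N) fun x hx y hy ↦ mem_rightColon.1 hy x hx).elim id fun hle ↦ ?_
    refine ih fun l hl hlN ↦ hle (mem_rightColon.2 fun x hx ↦ ?_)
    simpa using h (x :: l) (by simp [hl]) (by simpa using ⟨hx, hlN⟩)

theorem ContainsPrimeInfPow.of_mul {I J K : TwoSidedIdeal A} (hI : ContainsPrimeInfPow I)
    (hJ : ContainsPrimeInfPow J) (h : ∀ x ∈ I, ∀ y ∈ J, x * y ∈ K) : ContainsPrimeInfPow K := by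
  obtain ⟨S, hS, hSp, m, hm⟩ := hI
  obtain ⟨S', hS', hSp', m', hm'⟩ := hJ
  refine ⟨S ∪ S', hS.union hS', ?_, m + m', fun l hl hlS ↦ ?_⟩
  · rintro Q (hQ | hQ)
    exacts [hSp Q hQ, hSp' Q hQ]
  · have hle : sInf (S ∪ S') ≤ sInf S := sInf_le_sInf Set.subset_union_left
    have hle' : sInf (S ∪ S') ≤ sInf S' := sInf_le_sInf Set.subset_union_right
    rw [← List.take_append_drop m l, List.prod_append]
    refine h _ (hm _ (by simp [hl]) fun x hx ↦ ?_) _ (hm' _ (by simp [hl]) fun x hx ↦ ?_)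
    exacts [hle (hlS x (List.mem_of_mem_take hx)), hle' (hlS x (List.mem_of_mem_drop hx))]

/-- Noether's argument: an ideal that is not prime contains a product of two larger ones. -/
theorem containsPrimeInfPow_of_wellFoundedGT [WellFoundedGT (TwoSidedIdeal A)]
    (I : TwoSidedIdeal A) : ContainsPrimeInfPow I := by
  induction I using WellFoundedGT.induction with
  | ind Q ih =>
  by_cases hQ : IsPrimeIdeal Q
  · exact hQ.containsPrimeInfPow
  simp only [IsPrimeIdeal, not_forall, not_or] at hQ
  obtain ⟨I, J, hIJ, hI, hJ⟩ := hQ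
  refine (ih (Q ⊔ I) (left_lt_sup.2 hI)).of_mul (ih (Q ⊔ J) (left_lt_sup.2 hJ)) ?_
  intro x hx y hy
  obtain ⟨q, hq, a, ha, rfl⟩ := TwoSidedIdeal.mem_sup.1 hx
  obtain ⟨r, hr, b, hb, rfl⟩ := TwoSidedIdeal.mem_sup.1 hy
  rw [add_mul, mul_add a]
  exact Q.add_mem (Q.mul_mem_right _ _ hq) (Q.add_mem (Q.mul_mem_left _ _ hr) (hIJ a ha b hb))

theorem HasNilpotentPrimeInf.of_finite (C : Type*) [CommRing C] [IsNoetherianRing C]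
    [Algebra C A] [Module.Finite C A] : HasNilpotentPrimeInf A := by
  let toSubmodule (I : TwoSidedIdeal A) : Submodule C A := I.asIdeal.restrictScalars C
  have hmono : StrictMono toSubmodule :=
    Monotone.strictMono_of_injective (fun _ _ h _ hx ↦ h hx) fun I J h ↦
      SetLike.ext fun x ↦ show x ∈ toSubmodule I ↔ x ∈ toSubmodule J by rw [h]
  have := hmono.wellFoundedGT
  exact containsPrimeInfPow_of_wellFoundedGT ⊥

theorem HasNilpotentPrimeInf.of_subsingleton [Subsingleton A] : HasNilpotentPrimeInf A :=
  .of_finite ℤ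

theorem HasNilpotentPrimeInf.of_noZeroDivisors [NoZeroDivisors A] : HasNilpotentPrimeInf A := by
  refine IsPrimeIdeal.containsPrimeInfPow fun I J h ↦ ?_
  simp only [TwoSidedIdeal.mem_bot] at h
  by_contra! hIJ
  simp only [TwoSidedIdeal.le_iff, Set.not_subset, SetLike.mem_coe, TwoSidedIdeal.mem_bot] at hIJ
  obtain ⟨⟨x, hx, hx0⟩, y, hy, hy0⟩ := hIJ
  exact mul_ne_zero hx0 hy0 (h x hx y hy)

end Primes

section TCore

variable {C A : Type*} [CommRing C] [Ring A] [Algebra C A]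

variable (C) in
/-- The largest T-ideal contained in the ideal `Q`. -/
def tCore (Q : TwoSidedIdeal A) : TwoSidedIdeal A :=
  ⨅ φ : A →ₐ[C] A, Q.comap φ

theorem mem_tCore {Q : TwoSidedIdeal A} {x : A} : x ∈ tCore C Q ↔ ∀ φ : A →ₐ[C] A, φ x ∈ Q := by
  simp [tCore, TwoSidedIdeal.mem_iInf, TwoSidedIdeal.mem_comap]

theorem tCore_le (Q : TwoSidedIdeal A) : tCore C Q ≤ Q :=
  fun _ hx ↦ mem_tCore.1 hx (AlgHom.id C A)

theorem isTIdeal_tCore (Q : TwoSidedIdeal A) : IsTIdeal C A (tCore C Q) :=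
  fun φ _ hx ↦ mem_tCore.2 fun ψ ↦ mem_tCore.1 hx (ψ.comp φ)

theorem le_tCore {I Q : TwoSidedIdeal A} (hI : IsTIdeal C A I) (h : I ≤ Q) : I ≤ tCore C Q :=
  fun x hx ↦ mem_tCore.2 fun φ ↦ h (hI φ x hx)

theorem IsPrimeIdeal.isTPrime_tCore {Q : TwoSidedIdeal A} (hQ : IsPrimeIdeal Q) :
    IsTPrime C A (tCore C Q) := fun I J hI hJ h ↦
  (hQ I J fun x hx y hy ↦
    tCore_le Q (h (TwoSidedIdeal.subset_span ⟨x, hx, y, hy, rfl⟩))).imp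
      (le_tCore hI) (le_tCore hJ)

theorem isTIdeal_iInf {ι : Type*} {P : ι → TwoSidedIdeal A} (hP : ∀ i, IsTIdeal C A (P i)) :
    IsTIdeal C A (⨅ i, P i) := fun φ x hx ↦
  (TwoSidedIdeal.mem_iInf A).2 fun i ↦ hP i φ x ((TwoSidedIdeal.mem_iInf A).1 hx i)

theorem IsPrimeIdeal.le_of_isNilpotent {Q N : TwoSidedIdeal A} (hQ : IsPrimeIdeal Q)
    (hN : IsNilpotentTwoSidedIdeal N) : N ≤ Q := by
  obtain ⟨m, hm⟩ := hN
  refine hQ.le_of_list_prod_mem (m := m) fun l hl hlN ↦ ?_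
  subst hl
  have hl0 : l.prod = 0 := by simpa using hm l.get fun i ↦ hlN _ (l.get_mem i)
  exact hl0 ▸ Q.zero_mem

theorem HasNilpotentPrimeInf.exists_tPrimes (h : HasNilpotentPrimeInf A) :
    ∃ k : ℕ, 1 ≤ k ∧ ∃ P : Fin k → TwoSidedIdeal A,
      (∀ i, IsTIdeal C A (P i) ∧ IsTPrime C A (P i)) ∧
      IsTIdeal C A (⨅ i, P i) ∧
      IsNilpotentTwoSidedIdeal (⨅ i, P i) ∧
      ∀ N : TwoSidedIdeal A, IsTIdeal C A N → IsNilpotentTwoSidedIdeal N →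
        N ≤ ⨅ i, P i := by
  obtain ⟨S, hS, hSp, m, hm⟩ := h
  -- The unit ideal is adjoined so that the family is nonempty.
  obtain ⟨k, Q, -, hQ⟩ := (hS.insert ⊤).fin_param
  have hQp (i : Fin k) : IsPrimeIdeal (Q i) := by
    obtain hi | hi : Q i ∈ insert ⊤ S := hQ ▸ Set.mem_range_self i
    · exact hi ▸ fun I J _ ↦ .inl le_top
    · exact hSp _ hi
  have hk : 1 ≤ k := by
    obtain ⟨i, -⟩ : ⊤ ∈ Set.range Q := hQ ▸ Set.mem_insert ⊤ S
    exact i.pos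
  have hle : ⨅ i, tCore C (Q i) ≤ sInf S := by
    refine le_sInf fun R hR ↦ ?_
    obtain ⟨i, rfl⟩ : R ∈ Set.range Q := hQ ▸ Set.mem_insert_of_mem ⊤ hR
    exact (iInf_le _ i).trans (tCore_le _)
  refine ⟨k, hk, fun i ↦ tCore C (Q i), fun i ↦ ⟨isTIdeal_tCore _, (hQp i).isTPrime_tCore⟩,
    isTIdeal_iInf fun i ↦ isTIdeal_tCore _, ⟨m, fun f hf ↦ ?_⟩,
    fun N hN hnil ↦ le_iInf fun i ↦ le_tCore hN ((hQp i).le_of_isNilpotent hnil)⟩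
  exact (TwoSidedIdeal.mem_bot A).1 (hm (List.ofFn f) (by simp)
    fun x hx ↦ by
      obtain ⟨i, rfl⟩ := (List.mem_ofFn' f x).1 hx
      exact hle (hf i))

end TCore

section CentralExtension

variable {C A B : Type*} [CommRing C] [Ring A] [Algebra C A] [Ring B] [Algebra C B]
  (R : Type*) [CommRing R] [Algebra R B]

/-- The algebra `B` is generated by the image of `φ : A → B` together with the scalars `R`, which
are central in `B`; this makes prime ideals of `B` contract to prime ideals of `A`. -/
def IsCentralExtension (φ : A →ₐ[C] B) : Prop :=
  Submodule.span R (Set.range φ) = ⊤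

variable {R} {φ : A →ₐ[C] B}

theorem IsCentralExtension.of_surjective (hφ : Function.Surjective φ) :
    IsCentralExtension C φ := by
  rw [IsCentralExtension, hφ.range_eq, Submodule.span_univ]

theorem IsCentralExtension.isPrimeIdeal_comap (hφ : IsCentralExtension R φ)
    {Q : TwoSidedIdeal B} (hQ : IsPrimeIdeal Q) : IsPrimeIdeal (Q.comap φ) := by
  intro I J hIJ
  have hmid : ∀ x ∈ φ '' I, ∀ z, ∀ y ∈ φ '' J, x * z * y ∈ Q := by
    rintro _ ⟨x, hx, rfl⟩ z _ ⟨y, hy, rfl⟩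
    have hz : z ∈ Submodule.span R (Set.range φ) := hφ ▸ Submodule.mem_top
    induction hz using Submodule.span_induction with
    | mem z hz =>
      obtain ⟨a, rfl⟩ := hz
      simpa only [map_mul] using (TwoSidedIdeal.mem_comap φ).1 (hIJ _ (I.mul_mem_right x a hx) y hy)
    | zero => simp [Q.zero_mem]
    | add z₁ z₂ _ _ h₁ h₂ => simpa only [mul_add, add_mul] using Q.add_mem h₁ h₂
    | smul r z _ h =>
      rw [mul_smul_comm, smul_mul_assoc, Algebra.smul_def]
      exact Q.mul_mem_left _ _ h
  refine (hQ (.span (φ '' I)) (.span (φ '' J)) fun x hx y hy ↦ mul_mem_of_mem_span hmid hx hy).imp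
    (fun h x hx ↦ ?_) fun h x hx ↦ ?_ <;>
  exact (TwoSidedIdeal.mem_comap φ).2 (h (TwoSidedIdeal.subset_span ⟨x, hx, rfl⟩))

theorem HasNilpotentPrimeInf.containsPrimeInfPow_ker (hB : HasNilpotentPrimeInf B)
    (hφ : IsCentralExtension R φ) : ContainsPrimeInfPow (TwoSidedIdeal.ker φ) := by
  obtain ⟨S, hS, hSp, m, hm⟩ := hB
  refine ⟨TwoSidedIdeal.comap φ '' S, hS.image _, ?_, m, fun l hl hlS ↦ ?_⟩
  · rintro _ ⟨Q, hQ, rfl⟩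
    exact hφ.isPrimeIdeal_comap (hSp Q hQ)
  · rw [TwoSidedIdeal.mem_ker, map_list_prod]
    refine (TwoSidedIdeal.mem_bot B).1 (hm _ (by simpa using hl) fun y hy ↦ ?_)
    obtain ⟨x, hx, rfl⟩ := List.mem_map.1 hy
    refine (TwoSidedIdeal.mem_sInf B).2 fun Q hQ ↦ (TwoSidedIdeal.mem_comap φ).1 ?_
    exact (TwoSidedIdeal.mem_sInf A).1 (hlS x hx) _ (Set.mem_image_of_mem _ hQ)

theorem HasNilpotentPrimeInf.of_injective (hB : HasNilpotentPrimeInf B)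
    (hφ : IsCentralExtension R φ) (hinj : Function.Injective φ) : HasNilpotentPrimeInf A := by
  rw [HasNilpotentPrimeInf, ← (TwoSidedIdeal.ker_eq_bot φ).2 hinj]
  exact hB.containsPrimeInfPow_ker hφ

theorem mkₐ_eq_zero {I : TwoSidedIdeal A} {a : A} : I.ringCon.mkₐ C a = 0 ↔ a ∈ I := by
  conv_rhs => rw [← I.ker_ringCon_mk', TwoSidedIdeal.mem_ker]
  rfl

theorem IsCentralExtension.mkₐ (I : TwoSidedIdeal A) : IsCentralExtension C (I.ringCon.mkₐ C) :=
  .of_surjective (RingCon.mkₐ_surjective _)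

theorem HasNilpotentPrimeInf.of_ker_of_rightColon (hB : HasNilpotentPrimeInf B)
    (hφ : IsCentralExtension R φ)
    (hA : HasNilpotentPrimeInf (rightColon ⊥ (TwoSidedIdeal.ker φ)).ringCon.Quotient) :
    HasNilpotentPrimeInf A := by
  refine (hB.containsPrimeInfPow_ker hφ).of_mul (hA.containsPrimeInfPow_ker (.mkₐ (C := C) _)) ?_
  intro x hx y hy
  rw [TwoSidedIdeal.mem_ker, mkₐ_eq_zero] at hy
  exact mem_rightColon.1 hy x hx

end CentralExtension

section Transfer

variable {C A B R : Type*} [CommRing C] [Ring A] [Algebra C A] [Ring B] [Algebra C B]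
  [CommRing R] [Algebra C R] [Algebra R B] [IsScalarTower C R B] {φ : A →ₐ[C] B}

theorem IsCentralExtension.adjoin_range_comp_eq_top (hφ : IsCentralExtension R φ) {X : Type*}
    {a : X → A} (ha : Algebra.adjoin C (Set.range a) = ⊤) :
    Algebra.adjoin R (Set.range (φ ∘ a)) = ⊤ := by
  have hrange : φ.range ≤ (Algebra.adjoin R (Set.range (φ ∘ a))).restrictScalars C := by
    rw [← Algebra.map_top, ← ha, AlgHom.map_adjoin, ← Set.range_comp, Algebra.adjoin_le_iff]
    exact Algebra.subset_adjoin
  rw [← Algebra.toSubmodule_eq_top, eq_top_iff, ← hφ, Submodule.span_le]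
  exact hrange

variable (A) in
/-- The algebra `A` satisfies the multilinear identity
`∑ σ, α σ • x (σ 0) * x (σ 1) * ⋯ * x (σ (d - 1)) = 0`. -/
def IsMultilinearIdentity {d : ℕ} (α : Equiv.Perm (Fin d) → C) : Prop :=
  ∀ x : Fin d → A, ∑ σ, α σ • (List.ofFn fun i ↦ x (σ i)).prod = 0

theorem IsMultilinearIdentity.map {d : ℕ} {α : Equiv.Perm (Fin d) → C}
    (h : IsMultilinearIdentity A α) (hφ : IsCentralExtension R φ) :
    IsMultilinearIdentity B fun σ ↦ algebraMap C R (α σ) := by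
  let F : MultilinearMap R (fun _ : Fin d ↦ B) B :=
    ∑ σ, algebraMap C R (α σ) • (MultilinearMap.mkPiAlgebraFin R d B).domDomCongr σ
  have hF : F = 0 := by
    refine MultilinearMap.ext_of_span_eq_top (g := fun _ : Fin d ↦ (φ : A → B)) (fun _ ↦ hφ) ?_
    intro x
    have := congrArg φ (h x)
    simpa [F, map_list_prod, List.map_ofFn, Function.comp_def] using this
  intro x
  simpa [F] using congrArg (· x) hF

/-- The element `w` is integral over `C`, with an equation of degree at most `k`. -/
def IsIntegralOfDegreeLE (C : Type*) {A : Type*} [CommRing C] [Ring A] [Algebra C A] (k : ℕ)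
    (w : A) : Prop :=
  ∃ g : Polynomial C, g.Monic ∧ g.natDegree ≤ k ∧ Polynomial.aeval w g = 0

theorem IsIntegralOfDegreeLE.map {k : ℕ} {w : A} (h : IsIntegralOfDegreeLE C k w) :
    IsIntegralOfDegreeLE R k (φ w) := by
  obtain ⟨g, hg, hk, hw⟩ := h
  refine ⟨g.map (algebraMap C R), hg.map _, (Polynomial.natDegree_map_le).trans hk, ?_⟩
  rw [Polynomial.aeval_map_algebraMap, Polynomial.aeval_algHom_apply, hw, map_zero]

end Transfer

section Interlacing

open MvPolynomial

/-- The product `w ^ k 0 * y 0 * w ^ k 1 * y 1 * ⋯`. -/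
def interlace {M : Type*} [Monoid M] (w : M) {n : ℕ} (y : Fin n → M) (k : Fin n → ℕ) : M :=
  (List.ofFn fun i ↦ w ^ k i * y i).prod

theorem prod_ofFn_update_zero {M : Type*} [Monoid M] {n : ℕ} (f : Fin (n + 1) → M) (a : M) :
    (List.ofFn (Function.update f 0 a)).prod = a * (List.ofFn fun j ↦ f j.succ).prod := by
  simp [List.ofFn_succ]

theorem prod_ofFn_update_succ {M : Type*} [Monoid M] {n : ℕ} (f : Fin (n + 1) → M) (i : Fin n)
    (a : M) :
    (List.ofFn (Function.update f i.succ a)).prod =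
      f 0 * (List.ofFn (Function.update (fun j ↦ f j.succ) i a)).prod := by
  rw [List.ofFn_succ, List.prod_cons, Function.update_of_ne (Fin.succ_ne_zero i).symm]
  congr 3
  ext j
  simp [Function.update_apply]

theorem prod_ofFn_update_mul_right {M : Type*} [Monoid M] {n : ℕ} (f : Fin (n + 1) → M)
    (i : Fin n) (w : M) :
    (List.ofFn (Function.update f i.castSucc (f i.castSucc * w))).prod =
      (List.ofFn (Function.update f i.succ (w * f i.succ))).prod := by
  induction n with
  | zero => exact i.elim0
  | succ n ih =>
    cases i using Fin.cases with
    | zero =>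
      rw [Fin.castSucc_zero, prod_ofFn_update_zero, prod_ofFn_update_succ, prod_ofFn_update_zero,
        List.ofFn_succ, List.prod_cons]
      simp only [mul_assoc]
    | succ i => rw [Fin.castSucc_succ, prod_ofFn_update_succ, prod_ofFn_update_succ, ih]

theorem map_interlace {M N F : Type*} [Monoid M] [Monoid N] [FunLike F M N] [MonoidHomClass F M N]
    (φ : F) (w : M) {n : ℕ} (y : Fin n → M) (k : Fin n → ℕ) :
    φ (interlace w y k) = interlace (φ w) (φ ∘ y) k := by
  simp [interlace, map_list_prod, List.map_ofFn, Function.comp_def]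

theorem interlace_update {M : Type*} [Monoid M] (w : M) {n : ℕ} (y : Fin n → M) (k : Fin n → ℕ)
    (i : Fin n) (a : M) :
    interlace w (Function.update y i a) k =
      (List.ofFn (Function.update (fun j ↦ w ^ k j * y j) i (w ^ k i * a))).prod := by
  rw [interlace]
  congr 2
  ext j
  obtain rfl | h := eq_or_ne j i
  · simp
  · simp [h]

theorem interlace_single_add {M : Type*} [Monoid M] (w : M) {n : ℕ} (y : Fin n → M)
    (k : Fin n → ℕ) (i : Fin n) :
    interlace w y (Pi.single i 1 + k) = interlace w (Function.update y i (w * y i)) k := by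
  rw [interlace, interlace_update]
  congr 2
  ext j
  obtain rfl | h := eq_or_ne j i
  · simp [add_comm 1, pow_succ, mul_assoc]
  · simp [h]

theorem interlace_single_succ_add {M : Type*} [Monoid M] (w : M) {n : ℕ} (y : Fin (n + 1) → M)
    (k : Fin (n + 1) → ℕ) (i : Fin n) :
    interlace w y (Pi.single i.succ 1 + k) =
      interlace w (Function.update y i.castSucc (y i.castSucc * w)) k := by
  rw [interlace_single_add, interlace_update, interlace_update, ← mul_assoc, ← mul_assoc,
    ← pow_succ, pow_succ', mul_assoc w]
  exact (prod_ofFn_update_mul_right (fun j ↦ w ^ k j * y j) i w).symm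

variable {C A : Type*} [CommRing C] [Ring A] [Algebra C A]

/-- The linear map sending the monomial `X₀ ^ k₀ ⋯ Xₙ₋₁ ^ kₙ₋₁` to
`w ^ k₀ * y₀ * ⋯ * w ^ kₙ₋₁ * yₙ₋₁`: the variable `Xᵢ` counts the copies of `w` in front of `yᵢ`. -/
noncomputable def interlaceEval (w : A) {n : ℕ} (y : Fin n → A) : MvPolynomial (Fin n) C →ₗ[C] A :=
  (basisMonomials (Fin n) C).constr C fun k ↦ interlace w y k

theorem interlaceEval_monomial (w : A) {n : ℕ} (y : Fin n → A) (k : Fin n →₀ ℕ) (c : C) :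
    interlaceEval w y (monomial k c) = c • interlace w y k := by
  have hone : interlaceEval w y (monomial k (1 : C)) = interlace w y k := by
    simpa [interlaceEval] using
      (basisMonomials (Fin n) C).constr_basis C (fun k ↦ interlace w y k) k
  rw [← hone, ← map_smul, smul_monomial, smul_eq_mul, mul_one]

theorem interlaceEval_eq_sum (w : A) {n : ℕ} (y : Fin n → A) (p : MvPolynomial (Fin n) C) :
    interlaceEval w y p = ∑ k ∈ p.support, p.coeff k • interlace w y k := by
  conv_lhs => rw [p.as_sum, map_sum]
  simp only [interlaceEval_monomial]

theorem interlaceEval_one (w : A) {n : ℕ} (y : Fin n → A) :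
    interlaceEval w y (1 : MvPolynomial (Fin n) C) = (List.ofFn y).prod := by
  rw [← C_1, C_apply, interlaceEval_monomial, one_smul]
  simp [interlace]

theorem interlaceEval_X_mul (w : A) {n : ℕ} (y : Fin n → A) (i : Fin n)
    (p : MvPolynomial (Fin n) C) :
    interlaceEval w y (X i * p) = interlaceEval w (Function.update y i (w * y i)) p := by
  induction p using MvPolynomial.induction_on' with
  | monomial k c =>
    rw [X, monomial_mul, one_mul, interlaceEval_monomial, interlaceEval_monomial,
      Finsupp.coe_add, Finsupp.single_eq_pi_single, interlace_single_add]
  | add p q hp hq => rw [mul_add, map_add, map_add, hp, hq]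

theorem interlaceEval_X_succ_mul (w : A) {n : ℕ} (y : Fin (n + 1) → A) (i : Fin n)
    (p : MvPolynomial (Fin (n + 1)) C) :
    interlaceEval w y (X i.succ * p) =
      interlaceEval w (Function.update y i.castSucc (y i.castSucc * w)) p := by
  induction p using MvPolynomial.induction_on' with
  | monomial k c =>
    rw [X, monomial_mul, one_mul, interlaceEval_monomial, interlaceEval_monomial,
      Finsupp.coe_add, Finsupp.single_eq_pi_single, interlace_single_succ_add]
  | add p q hp hq => rw [mul_add, map_add, map_add, hp, hq]

theorem map_interlaceEval {B : Type*} [Ring B] [Algebra C B] (φ : A →ₐ[C] B) (w : A) {n : ℕ}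
    (y : Fin n → A) (p : MvPolynomial (Fin n) C) :
    φ (interlaceEval w y p) = interlaceEval (φ w) (φ ∘ y) p := by
  simp only [interlaceEval_eq_sum, map_sum, map_smul, map_interlace]

theorem interlaceEval_cons (w b : A) {n : ℕ} (y : Fin n → A) (j : ℕ)
    (p : MvPolynomial (Fin n) C) :
    interlaceEval w (Fin.cons b y) (X 0 ^ j * rename Fin.succ p) =
      w ^ j * b * interlaceEval w y p := by
  induction p using MvPolynomial.induction_on' with
  | monomial k c =>
    have hcons : Finsupp.single 0 j + Finsupp.mapDomain Fin.succ k = Finsupp.cons j k := by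
      ext i
      cases i using Fin.cases with
      | zero => simp [Finsupp.mapDomain_of_notMem_range]
      | succ i => simp [Finsupp.mapDomain_apply (Fin.succ_injective n)]
    rw [rename_monomial, X_pow_eq_monomial, monomial_mul, one_mul, hcons, interlaceEval_monomial,
      interlaceEval_monomial, mul_smul_comm]
    simp [interlace, List.ofFn_succ]
  | add p q hp hq => rw [map_add, mul_add, map_add, hp, hq, map_add, mul_add]

variable (C) in
/-- The polynomials all of whose interlaced values at `w` vanish. -/
noncomputable def interlaceIdeal (w : A) (n : ℕ) : Ideal (MvPolynomial (Fin n) C) where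
  carrier := {p | ∀ y : Fin n → A, interlaceEval w y p = 0}
  zero_mem' y := map_zero _
  add_mem' hp hq y := by rw [map_add, hp y, hq y, add_zero]
  smul_mem' q p hp := by
    simp only [Set.mem_ofPred_eq] at hp
    induction q using MvPolynomial.induction_on with
    | C a => exact fun y ↦ by rw [smul_eq_mul, C_mul', map_smul, hp y, smul_zero]
    | add q r hq hr => exact fun y ↦ by rw [add_smul, map_add, hq y, hr y, add_zero]
    | mul_X q i hq =>
      exact fun y ↦ by rw [smul_eq_mul, mul_comm q, mul_assoc, interlaceEval_X_mul]; exact hq _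

theorem mem_interlaceIdeal {w : A} {n : ℕ} {p : MvPolynomial (Fin n) C} :
    p ∈ interlaceIdeal C w n ↔ ∀ y : Fin n → A, interlaceEval w y p = 0 :=
  Iff.rfl

end Interlacing

section Vandermonde

open MvPolynomial

variable (C : Type*) [CommRing C]

/-- The Vandermonde polynomial `∏_{i < j} (Xᵢ - Xⱼ)`, with the signs that make it monic for the
lexicographic order. -/
noncomputable def vandermondePoly (n : ℕ) : MvPolynomial (Fin n) C :=
  ∏ i, ∏ j ∈ Finset.Ioi i, (X i - X j)

theorem vandermondePoly_zero : vandermondePoly C 0 = 1 := by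
  simp [vandermondePoly]

theorem vandermondePoly_succ (n : ℕ) :
    vandermondePoly C (n + 1) =
      (∏ i : Fin n, (X 0 - X i.succ)) * rename Fin.succ (vandermondePoly C n) := by
  simp [vandermondePoly, Fin.prod_univ_succ, Fin.prod_Ioi_succ, map_prod]

theorem vandermondePoly_succ_eq_prod_filter (n : ℕ) :
    vandermondePoly C (n + 1) =
      ∏ p : Fin n × Fin n with p.1 ≤ p.2, (X p.1.castSucc - X p.2.succ) := by
  have hIoi (i : Fin n) : Finset.Ioi i.castSucc = Finset.Ici i.succ := by
    ext j
    simp [Fin.castSucc_lt_iff_succ_le]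
  have hIci (i : Fin n) : Finset.Ici i = ({j | i ≤ j} : Finset (Fin n)) := by
    ext j
    simp
  simp only [vandermondePoly, Fin.prod_univ_castSucc, ← Fin.top_eq_last, Finset.Ioi_top,
    Finset.prod_empty, mul_one, hIoi, Fin.prod_Ici_succ, hIci, Finset.prod_filter]
  rw [← Finset.univ_product_univ, Finset.prod_product]

theorem isHomogeneous_vandermondePoly (n : ℕ) :
    (vandermondePoly C n).IsHomogeneous (∑ i : Fin n, ∑ _j ∈ Finset.Ioi i, 1) :=
  .prod _ _ _ fun i _ ↦ .prod _ _ _ fun j _ ↦ (isHomogeneous_X C i).sub (isHomogeneous_X C j)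

theorem exists_coeff_vandermondePoly_eq_one (n : ℕ) : ∃ k, (vandermondePoly C n).coeff k = 1 := by
  nontriviality C
  let m : MonomialOrder (Fin n) := MonomialOrder.lex
  have hX {i j : Fin n} (hij : i < j) : m.Monic (X i - X j : MvPolynomial (Fin n) C) := by
    have hdeg : m.toSyn (m.degree (X j : MvPolynomial (Fin n) C)) <
        m.toSyn (m.degree (X i : MvPolynomial (Fin n) C)) := by
      rw [m.degree_X, m.degree_X]
      exact MonomialOrder.lex_lt_iff.2 (Finsupp.Lex.single_lt_iff.2 hij)
    rw [MonomialOrder.Monic, m.leadingCoeff_sub_of_lt hdeg]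
    exact m.monic_X
  have hV : m.Monic (vandermondePoly C n) :=
    .prod fun i _ ↦ .prod fun j hj ↦ hX (Finset.mem_Ioi.1 hj)
  exact ⟨_, hV⟩

end Vandermonde

section InterlacedIdentity

open MvPolynomial

variable {C A : Type*} [CommRing C] [Ring A] [Algebra C A] {d : ℕ}

/-- The identity `∑ σ, α σ • y_{σ 0} ⋯ y_{σ (d - 1)} z = 0` with its `σ`-term multiplied by the
polynomial `P σ` in the `d + 1` slots for powers of `w`. -/
def IsInterlacedIdentity (w : A) (α : Equiv.Perm (Fin d) → C)
    (P : Equiv.Perm (Fin d) → MvPolynomial (Fin (d + 1)) C) : Prop :=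
  ∀ (y : Fin d → A) (z : A),
    ∑ σ, α σ • interlaceEval w (Fin.snoc (α := fun _ ↦ A) (y ∘ σ) z) (P σ) = 0

theorem IsMultilinearIdentity.isInterlacedIdentity_one {α : Equiv.Perm (Fin d) → C}
    (hα : IsMultilinearIdentity A α) (w : A) : IsInterlacedIdentity w α 1 := by
  intro y z
  have hz := congrArg (· * z) (hα y)
  have hsnoc (σ : Equiv.Perm (Fin d)) :
      (List.ofFn (Fin.snoc (α := fun _ ↦ A) (y ∘ σ) z)).prod =
        (List.ofFn fun i ↦ y (σ i)).prod * z := by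
    rw [List.ofFn_succ', List.prod_concat]
    simp
  simpa only [Pi.one_apply, interlaceEval_one, hsnoc, Finset.sum_mul, smul_mul_assoc,
    zero_mul] using hz

theorem snoc_update_comp {A : Type*} (y : Fin d → A) (z : A) (σ : Equiv.Perm (Fin d)) (i : Fin d)
    (a : A) :
    Fin.snoc (α := fun _ ↦ A) (Function.update y i a ∘ σ) z =
      Function.update (Fin.snoc (α := fun _ ↦ A) (y ∘ σ) z) (σ⁻¹ i).castSucc a := by
  rw [← Fin.snoc_update]
  congr 1
  exact Function.update_comp_equiv y σ i a

theorem IsInterlacedIdentity.mul_sub {w : A} {α : Equiv.Perm (Fin d) → C}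
    {P : Equiv.Perm (Fin d) → MvPolynomial (Fin (d + 1)) C} (hP : IsInterlacedIdentity w α P)
    (p : Fin d × Fin d) :
    IsInterlacedIdentity w α fun σ ↦ (X (σ⁻¹ p.1).castSucc - X (σ⁻¹ p.2).succ) * P σ := by
  intro y z
  have hsub := congrArg₂ (· - ·) (hP (Function.update y p.1 (w * y p.1)) z)
    (hP (Function.update y p.2 (y p.2 * w)) z)
  simp only [snoc_update_comp, sub_zero, ← Finset.sum_sub_distrib, ← smul_sub] at hsub
  simp only [sub_mul, map_sub, interlaceEval_X_succ_mul]
  simp only [interlaceEval_X_mul]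
  simpa using hsub

theorem IsInterlacedIdentity.mul_prod_sub {w : A} {α : Equiv.Perm (Fin d) → C}
    {P : Equiv.Perm (Fin d) → MvPolynomial (Fin (d + 1)) C} (hP : IsInterlacedIdentity w α P)
    (s : Finset (Fin d × Fin d)) :
    IsInterlacedIdentity w α fun σ ↦
      (∏ p ∈ s, (X (σ⁻¹ p.1).castSucc - X (σ⁻¹ p.2).succ)) * P σ := by
  induction s using Finset.induction_on with
  | empty => simpa using hP
  | insert p s hp ih => simpa only [Finset.prod_insert hp, mul_assoc] using ih.mul_sub p

theorem exists_succ_apply_lt_of_ne_one {σ : Equiv.Perm (Fin d)} (hσ : σ ≠ 1) :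
    ∃ k k' : Fin d, k'.castSucc = k.succ ∧ σ k' ≤ σ k := by
  contrapose! hσ
  have hmono : StrictMono σ := by
    cases d with
    | zero => exact fun i ↦ i.elim0
    | succ n => exact Fin.strictMono_iff_lt_succ.2 fun i ↦ hσ i.castSucc i.succ rfl
  ext i
  simp [(StrictMono.range_inj hmono strictMono_id).1 (by simp)]

/-- Multiplying the variables by `w` on either side turns a multilinear identity into one whose
`σ`-term carries a product of differences, which vanishes for `σ ≠ 1` and is the Vandermonde
polynomial for `σ = 1`. -/
theorem IsMultilinearIdentity.smul_vandermondePoly_mem {α : Equiv.Perm (Fin d) → C}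
    (hα : IsMultilinearIdentity A α) (w : A) :
    α 1 • vandermondePoly C (d + 1) ∈ interlaceIdeal C w (d + 1) := by
  rw [mem_interlaceIdeal]
  intro y
  have hprod := (hα.isInterlacedIdentity_one w).mul_prod_sub {p | p.1 ≤ p.2} (Fin.init y)
    (y (Fin.last d))
  rw [Finset.sum_eq_single_of_mem 1 (Finset.mem_univ 1)] at hprod
  · simpa [vandermondePoly_succ_eq_prod_filter] using hprod
  · intro σ _ hσ
    obtain ⟨k, k', hkk', hle⟩ := exists_succ_apply_lt_of_ne_one hσ
    beta_reduce
    rw [Finset.prod_eq_zero (i := (σ k', σ k)) (by simpa using hle) (by simp [hkk']), zero_mul,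
      map_zero, smul_zero]

end InterlacedIdentity

section IdealCore

variable {S : Type*} [Ring S]

/-- The largest two-sided ideal contained in an additive subgroup. -/
def idealCore (N : AddSubgroup S) : TwoSidedIdeal S :=
  .mk' {t | ∀ u v, u * t * v ∈ N}
    (fun u v ↦ by simp [N.zero_mem])
    (fun ht hs u v ↦ by simpa only [mul_add, add_mul] using N.add_mem (ht u v) (hs u v))
    (fun ht u v ↦ by simpa only [mul_neg, neg_mul] using N.neg_mem (ht u v))
    (fun ht u v ↦ by simpa only [mul_assoc] using ht (u * _) v)
    (fun ht u v ↦ by simpa only [mul_assoc] using ht u (_ * v))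

theorem mem_idealCore {N : AddSubgroup S} {t : S} :
    t ∈ idealCore N ↔ ∀ u v, u * t * v ∈ N := by
  rw [idealCore, TwoSidedIdeal.mem_mk']
  rfl

end IdealCore

section IntegralExtension

open MvPolynomial TensorProduct

variable {C A : Type*} [CommRing C] [Ring A] [Algebra C A]

/-- The linear map `r ⊗ a ↦ a * interlaceEval w y (r * V)`, where `V` is the Vandermonde
polynomial. -/
noncomputable def interlaceTensor (w : A) {n : ℕ} (y : Fin n → A) :
    MvPolynomial (Fin n) C ⊗[C] A →ₗ[C] A :=
  TensorProduct.lift <| (LinearMap.mul C A).flip ∘ₗ interlaceEval w y ∘ₗ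
    LinearMap.mulRight C (vandermondePoly C n)

theorem interlaceTensor_tmul (w : A) {n : ℕ} (y : Fin n → A) (r : MvPolynomial (Fin n) C)
    (a : A) :
    interlaceTensor w y (r ⊗ₜ[C] a) = a * interlaceEval w y (r * vandermondePoly C n) := by
  simp [interlaceTensor]

theorem interlaceTensor_tmul_mul_aeval_mul_tmul (w : A) {n : ℕ} (y : Fin n → A)
    (r r' : MvPolynomial (Fin n) C) (a b : A) (g : Polynomial (MvPolynomial (Fin n) C)) :
    interlaceTensor w y ((r ⊗ₜ[C] a) * Polynomial.aeval (1 ⊗ₜ[C] w) g * (r' ⊗ₜ[C] b)) =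
      a * interlaceEval w (Fin.cons b y) (rename Fin.succ (r * r') *
        (g.eval₂ (rename Fin.succ).toRingHom (X 0) * rename Fin.succ (vandermondePoly C n))) := by
  induction g using Polynomial.induction_on' with
  | add p q hp hq =>
    rw [map_add, mul_add, add_mul, map_add, hp, hq, Polynomial.eval₂_add, add_mul, mul_add, map_add,
      mul_add]
  | monomial j c =>
    have hpoly : rename Fin.succ (r * r') *
        (rename Fin.succ c * X 0 ^ j * rename Fin.succ (vandermondePoly C n)) =
        X 0 ^ j * rename Fin.succ (r * c * r' * vandermondePoly C n) := by
      simp only [map_mul]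
      ring
    rw [Polynomial.aeval_monomial, Algebra.TensorProduct.algebraMap_apply, Algebra.algebraMap_self,
      RingHom.id_apply, Polynomial.eval₂_monomial, AlgHom.toRingHom_eq_coe, RingHom.coe_coe, hpoly,
      interlaceEval_cons]
    simp [interlaceTensor_tmul, mul_assoc]

variable (C) in
/-- The largest ideal on which all the maps `interlaceTensor w y` vanish. If the Vandermonde
polynomial in `n + 1` variables vanishes at `w`, it contains the relation `∏ (w - Xᵢ)`. -/
noncomputable def integralityIdeal (w : A) (n : ℕ) :
    TwoSidedIdeal (MvPolynomial (Fin n) C ⊗[C] A) :=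
  idealCore (⨅ y : Fin n → A, (interlaceTensor w y).toAddMonoidHom.ker)

theorem mem_integralityIdeal {w : A} {n : ℕ} {t : MvPolynomial (Fin n) C ⊗[C] A} :
    t ∈ integralityIdeal C w n ↔ ∀ u v y, interlaceTensor w y (u * t * v) = 0 := by
  simp [integralityIdeal, mem_idealCore, AddSubgroup.mem_iInf]

variable (C) in
/-- The algebra obtained from `A` by adjoining `n` commuting variables and dividing by
`integralityIdeal`, which makes `w` integral over the variables. -/
def IntegralExtension (w : A) (n : ℕ) : Type _ :=
  (integralityIdeal C w n).ringCon.Quotient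

namespace IntegralExtension

variable (w : A) (n : ℕ)

noncomputable instance : Ring (IntegralExtension C w n) :=
  inferInstanceAs (Ring (integralityIdeal C w n).ringCon.Quotient)

noncomputable instance : Algebra (MvPolynomial (Fin n) C) (IntegralExtension C w n) :=
  inferInstanceAs (Algebra _ (integralityIdeal C w n).ringCon.Quotient)

noncomputable instance : Algebra C (IntegralExtension C w n) :=
  inferInstanceAs (Algebra _ (integralityIdeal C w n).ringCon.Quotient)

instance : IsScalarTower C (MvPolynomial (Fin n) C) (IntegralExtension C w n) :=
  inferInstanceAs (IsScalarTower _ _ (integralityIdeal C w n).ringCon.Quotient)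

variable (C) in
/-- The quotient map onto the extension, linear over the adjoined variables. -/
noncomputable def mk : MvPolynomial (Fin n) C ⊗[C] A →ₐ[MvPolynomial (Fin n) C]
    IntegralExtension C w n :=
  (integralityIdeal C w n).ringCon.mkₐ (MvPolynomial (Fin n) C)

variable (C) in
/-- The canonical homomorphism to the extension of `A` in which `w` is integral. -/
noncomputable def of : A →ₐ[C] IntegralExtension C w n :=
  ((mk C w n).restrictScalars C).comp Algebra.TensorProduct.includeRight

theorem mk_surjective : Function.Surjective (mk C w n) :=
  RingCon.mkₐ_surjective _

theorem isCentralExtension_of : IsCentralExtension (MvPolynomial (Fin n) C) (of C w n) := by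
  have hspan : Submodule.span (MvPolynomial (Fin n) C)
      (Set.range (Algebra.TensorProduct.includeRight : A →ₐ[C] MvPolynomial (Fin n) C ⊗[C] A)) =
      ⊤ := by
    rw [← Submodule.baseChange_top, Submodule.baseChange_eq_span, Submodule.map_top]
    rfl
  have hmap := congrArg (Submodule.map (mk C w n).toLinearMap) hspan
  rw [Submodule.map_span, Submodule.map_top, LinearMap.range_eq_top.2 (mk_surjective w n),
    ← Set.range_comp] at hmap
  exact hmap

variable {w n}

theorem mk_eq_zero {t : MvPolynomial (Fin n) C ⊗[C] A} :
    mk C w n t = 0 ↔ t ∈ integralityIdeal C w n :=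
  mkₐ_eq_zero

theorem mul_interlaceEval_eq_zero {a : A} (ha : of C w n a = 0) (y : Fin n → A) :
    a * interlaceEval w y (vandermondePoly C n) = 0 := by
  have hmem := mem_integralityIdeal.1 (mk_eq_zero.1 ha) 1 1 y
  simpa [interlaceTensor_tmul] using hmem

theorem aeval_prod_X_sub_C_mem_integralityIdeal
    (hw : vandermondePoly C (n + 1) ∈ interlaceIdeal C w (n + 1)) :
    Polynomial.aeval (1 ⊗ₜ w)
      (∏ i : Fin n, (Polynomial.X - Polynomial.C (X i : MvPolynomial (Fin n) C))) ∈
      integralityIdeal C w n := by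
  rw [mem_integralityIdeal]
  intro u v y
  induction u using TensorProduct.induction_on with
  | zero => simp
  | add u u' hu hu' => rw [add_mul, add_mul, map_add, hu, hu', add_zero]
  | tmul r a =>
    induction v using TensorProduct.induction_on with
    | zero => simp
    | add v v' hv hv' => rw [mul_add, map_add, hv, hv', add_zero]
    | tmul r' b =>
      have heval : (∏ i : Fin n, (Polynomial.X - Polynomial.C (X i : MvPolynomial _ C))).eval₂
          (rename Fin.succ).toRingHom (X 0) = ∏ i : Fin n, (X 0 - X i.succ) := by
        simp [Polynomial.eval₂_finsetProd]
      rw [interlaceTensor_tmul_mul_aeval_mul_tmul, heval, ← vandermondePoly_succ,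
        mem_interlaceIdeal.1 ((interlaceIdeal C w (n + 1)).mul_mem_left _ hw), mul_zero]

theorem isIntegralOfDegreeLE_of
    (hw : vandermondePoly C (n + 1) ∈ interlaceIdeal C w (n + 1)) :
    IsIntegralOfDegreeLE (MvPolynomial (Fin n) C) n (of C w n w) := by
  refine ⟨∏ i, (Polynomial.X - Polynomial.C (X i)), ?_, ?_, ?_⟩
  · exact Polynomial.monic_prod_of_monic _ _ fun i _ ↦ Polynomial.monic_X_sub_C _
  · refine (Polynomial.natDegree_prod_le _ _).trans ?_
    refine (Finset.sum_le_card_nsmul _ _ 1 fun i _ ↦ Polynomial.natDegree_X_sub_C_le _).trans ?_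
    simp
  · exact (Polynomial.aeval_algHom_apply (mk C w n) _ _).trans
      (mk_eq_zero.2 (aeval_prod_X_sub_C_mem_integralityIdeal hw))

end IntegralExtension

end IntegralExtension

section Words

variable {X : Type*}

/-- The word `u` is smaller than `v` at the first position where they differ; unlike for the
lexicographic order, a word is not comparable to its prefixes. -/
def StrictLex [LT X] (u v : List X) : Prop :=
  ∃ p a b s t, u = p ++ a :: s ∧ v = p ++ b :: t ∧ a < b

theorem StrictLex.append [LT X] {u v : List X} (h : StrictLex u v) (p s t : List X) :
    StrictLex (p ++ u ++ s) (p ++ v ++ t) := by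
  obtain ⟨q, a, b, s', t', rfl, rfl, hab⟩ := h
  exact ⟨p ++ q, a, b, s' ++ s, t' ++ t, by simp, by simp, hab⟩

theorem StrictLex.lt [LinearOrder X] {u v : List X} (h : StrictLex u v) : u < v := by
  obtain ⟨p, a, b, s, t, rfl, rfl, hab⟩ := h
  exact List.append_left_lt (List.cons_lt_cons_iff.2 (Or.inl hab))

theorem strictLex_or_exists_append_cons_of_lt [LinearOrder X] {u v : List X} (h : u < v) :
    StrictLex u v ∨ ∃ e s, v = u ++ e :: s := by
  induction h with
  | nil => exact Or.inr ⟨_, _, rfl⟩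
  | rel hab => exact Or.inl ⟨[], _, _, _, _, rfl, rfl, hab⟩
  | cons _ ih =>
    obtain ⟨p, a, b, s, t, rfl, rfl, hab⟩ | ⟨e, s, rfl⟩ := ih
    · exact Or.inl ⟨_ :: p, a, b, s, t, rfl, rfl, hab⟩
    · exact Or.inr ⟨e, s, rfl⟩

/-- The words `u 0, …, u (d - 1)` are nonempty and every nontrivial rearrangement of their
concatenation is smaller than the concatenation itself. -/
def IsDivided [LT X] {d : ℕ} (u : Fin d → List X) : Prop :=
  (∀ i, u i ≠ []) ∧ ∀ σ : Equiv.Perm (Fin d), σ ≠ 1 →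
    StrictLex (List.ofFn fun i ↦ u (σ i)).flatten (List.ofFn u).flatten

/-- The word `l` contains the `k`-th power of a nonempty word or a `d`-divided word. -/
def HasPowerOrDivided [LT X] (k d : ℕ) (l : List X) : Prop :=
  (∃ u : List X, u ≠ [] ∧ (List.replicate k u).flatten <:+: l) ∨
    ∃ u : Fin d → List X, IsDivided u ∧ (List.ofFn u).flatten <:+: l

theorem HasPowerOrDivided.of_isInfix [LT X] {k d : ℕ} {l l' : List X}
    (h : HasPowerOrDivided k d l) (hl : l <:+: l') : HasPowerOrDivided k d l' :=
  h.imp (fun ⟨u, hu, h⟩ ↦ ⟨u, hu, h.trans hl⟩) fun ⟨u, hu, h⟩ ↦ ⟨u, hu, h.trans hl⟩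

theorem length_flatten_ofFn_comp_perm {d : ℕ} (u : Fin d → List X) (σ : Equiv.Perm (Fin d)) :
    (List.ofFn fun i ↦ u (σ i)).flatten.length = (List.ofFn u).flatten.length := by
  simpa [List.length_flatten, List.map_ofFn, List.sum_ofFn] using
    Equiv.sum_comp σ fun i ↦ (u i).length

theorem flatten_ofFn_flatten {d : ℕ} (u : Fin d → List (List X)) :
    (List.ofFn fun i ↦ (u i).flatten).flatten = (List.ofFn u).flatten.flatten := by
  simp [List.flatten_flatten, List.map_ofFn, Function.comp_def]

end Words

section Blocks

variable {X : Type*}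

/-- A block for the letter `x`: a nonempty word in smaller letters followed by a positive power
of `x`. -/
def IsBlock [LT X] (x : X) (b : List X) : Prop :=
  ∃ v i, v ≠ [] ∧ (∀ a ∈ v, a < x) ∧ b = v ++ List.replicate (i + 1) x

theorem IsBlock.exists_eq_cons [LT X] {x : X} {b : List X} (h : IsBlock x b) :
    ∃ a s, a < x ∧ b = a :: s := by
  obtain ⟨v, j, hv, hvx, rfl⟩ := h
  obtain ⟨a, v, rfl⟩ := List.exists_cons_of_ne_nil hv
  exact ⟨a, _, hvx a List.mem_cons_self, rfl⟩

theorem IsBlock.exists_eq_concat [LT X] {x : X} {b : List X} (h : IsBlock x b) :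
    ∃ s, b = s ++ [x] := by
  obtain ⟨v, j, -, -, rfl⟩ := h
  exact ⟨v ++ List.replicate j x, by simp [List.replicate_succ']⟩

theorem exists_flatten_eq_cons [LT X] {x : X} {bs : List (List X)}
    (hbs : ∀ b ∈ bs, IsBlock x b) (hne : bs ≠ []) : ∃ a s, a < x ∧ bs.flatten = a :: s := by
  obtain ⟨b, bs, rfl⟩ := List.exists_cons_of_ne_nil hne
  obtain ⟨a, s, ha, rfl⟩ := (hbs b List.mem_cons_self).exists_eq_cons
  exact ⟨a, s ++ bs.flatten, ha, by simp⟩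

variable [LinearOrder X]

theorem exists_eq_replicate_append_blocks (x : X) (l : List X) (hl : ∀ a ∈ l, a ≤ x) :
    ∃ (i : ℕ) (bs : List (List X)) (t : List X), (∀ b ∈ bs, IsBlock x b) ∧ (∀ a ∈ t, a < x) ∧
      l = List.replicate i x ++ bs.flatten ++ t := by
  induction l with
  | nil => exact ⟨0, [], [], by simp⟩
  | cons a l ih =>
    obtain ⟨i, bs, t, hbs, ht, rfl⟩ := ih fun b hb ↦ hl b (List.mem_cons_of_mem _ hb)
    obtain rfl | ha := (hl a List.mem_cons_self).eq_or_lt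
    · exact ⟨i + 1, bs, t, hbs, ht, by simp [List.replicate_succ]⟩
    obtain _ | i := i
    · obtain _ | ⟨b, bs⟩ := bs
      · exact ⟨0, [], a :: t, by simp, by simpa using ⟨ha, ht⟩, by simp⟩
      · obtain ⟨⟨v, j, -, hvx, rfl⟩, hbs'⟩ := List.forall_mem_cons.1 hbs
        refine ⟨0, (a :: v ++ List.replicate (j + 1) x) :: bs, t,
          List.forall_mem_cons.2 ⟨⟨a :: v, j, by simp, ?_, rfl⟩, hbs'⟩, ht, by simp⟩
        simpa using ⟨ha, hvx⟩
    · exact ⟨0, ([a] ++ List.replicate (i + 1) x) :: bs, t,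
        List.forall_mem_cons.2 ⟨⟨[a], i, by simp, by simpa using ha, rfl⟩, hbs⟩, ht, by simp⟩

theorem IsBlock.eq_of_append_cons {x e : X} {b s : List X} (hb : IsBlock x b)
    (hc : IsBlock x (b ++ e :: s)) : e = x := by
  obtain ⟨v, j, -, hv, rfl⟩ := hb
  obtain ⟨v', j', -, hv', h⟩ := hc
  have hdrop := congrArg (List.dropWhile (· < x)) h
  rw [List.append_assoc, List.dropWhile_append_of_pos (l₁ := v) (by simpa using hv),
    List.dropWhile_append_of_pos (l₁ := v') (by simpa using hv')] at hdrop
  have he : List.replicate j x ++ e :: s = List.replicate j' x := by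
    simpa [List.replicate_succ] using hdrop
  exact List.eq_of_mem_replicate (n := j') (he ▸ by simp)

theorem StrictLex.flatten {x : X} {u v : List (List X)} (hu : ∀ b ∈ u, IsBlock x b)
    (hv : ∀ b ∈ v, IsBlock x b) (hlen : u.flatten.length = v.flatten.length)
    (h : StrictLex u v) : StrictLex u.flatten v.flatten := by
  obtain ⟨p, b, c, s, t, rfl, rfl, hbc⟩ := h
  have hb : IsBlock x b := hu b (by simp)
  have hc : IsBlock x c := hv c (by simp)
  obtain h | ⟨e, r, rfl⟩ := strictLex_or_exists_append_cons_of_lt hbc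
  · simpa using h.append p.flatten s.flatten t.flatten
  · obtain rfl := hb.eq_of_append_cons hc
    have hs : s ≠ [] := by
      rintro rfl
      simp at hlen
    obtain ⟨a, s', ha, hs'⟩ := exists_flatten_eq_cons (fun b hb ↦ hu b (by simp [hb])) hs
    exact ⟨p.flatten ++ b, a, e, s', r ++ t.flatten, by simp [hs'], by simp, ha⟩

theorem IsDivided.flatten {x : X} {d : ℕ} {u : Fin d → List (List X)}
    (hu : ∀ i, ∀ b ∈ u i, IsBlock x b) (h : IsDivided u) : IsDivided fun i ↦ (u i).flatten := by
  have hmem (σ : Equiv.Perm (Fin d)) : ∀ b ∈ (List.ofFn fun i ↦ u (σ i)).flatten, IsBlock x b := by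
    simp only [List.mem_flatten, List.mem_ofFn]
    rintro b ⟨_, ⟨i, rfl⟩, hb⟩
    exact hu _ b hb
  refine ⟨fun i ↦ ?_, fun σ hσ ↦ ?_⟩
  · obtain ⟨a, s, -, has⟩ := exists_flatten_eq_cons (hu i) (h.1 i)
    simp [has]
  · have hlen := length_flatten_ofFn_comp_perm (fun i ↦ (u i).flatten) σ
    rw [flatten_ofFn_flatten fun i ↦ u (σ i), flatten_ofFn_flatten] at hlen ⊢
    exact (h.2 σ hσ).flatten (hmem σ) (hmem 1) hlen

theorem IsDivided.cons {x : X} {d : ℕ} {u : Fin d → List X} (hu : ∀ i, ∃ a s, a < x ∧ u i = a :: s)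
    (h : IsDivided u) : IsDivided (Fin.cons (α := fun _ ↦ List X) [x] u) := by
  refine ⟨Fin.cases (by simp) (by simpa using h.1), fun σ hσ ↦ ?_⟩
  obtain ⟨⟨p, τ⟩, rfl⟩ := Equiv.Perm.decomposeFin.symm.surjective σ
  rw [List.ofFn_succ, List.ofFn_succ (f := Fin.cons (α := fun _ ↦ List X) [x] u)]
  simp only [Equiv.Perm.decomposeFin_symm_apply_zero, Equiv.Perm.decomposeFin_symm_apply_succ,
    Fin.cons_zero, Fin.cons_succ, List.flatten_cons]
  cases p using Fin.cases with
  | zero =>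
    have hτ : τ ≠ 1 := by
      rintro rfl
      exact hσ ((Equiv.Perm.decomposeFin_symm_of_one 0).trans (Equiv.swap_self 0))
    simpa using (h.2 τ hτ).append [x] [] []
  | succ i =>
    obtain ⟨a, s, ha, has⟩ := hu i
    rw [Fin.cons_succ, has]
    exact ⟨[], a, x, _, _, rfl, rfl, ha⟩

theorem exists_blocks_of_bounds {x : X} {l : List X} {N k : ℕ} (hl : ∀ a ∈ l, a ≤ x)
    (hshort : ∀ v, (∀ a ∈ v, a < x) → v <:+: l → v.length < N)
    (hrun : ∀ i, List.replicate i x <:+: l → i < k) :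
    ∃ bs : List (List X), (∀ b ∈ bs, IsBlock x b ∧ b.length ≤ N + k) ∧ bs.flatten <:+: l ∧
      l.length ≤ k + bs.length * (N + k) + N := by
  obtain ⟨i, bs, t, hbs, ht, rfl⟩ := exists_eq_replicate_append_blocks x l hl
  have hbsl : bs.flatten <:+: List.replicate i x ++ bs.flatten ++ t := ⟨_, t, rfl⟩
  have hlen (b) (hb : b ∈ bs) : b.length ≤ N + k := by
    have hbl := (List.infix_of_mem_flatten hb).trans hbsl
    obtain ⟨v, j, -, hv, rfl⟩ := hbs b hb
    have hvN := hshort v hv ((List.prefix_append v _).isInfix.trans hbl)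
    have hjk := hrun (j + 1) ((List.suffix_append v _).isInfix.trans hbl)
    simp only [List.length_append, List.length_replicate]
    lia
  have hflat : bs.flatten.length ≤ bs.length * (N + k) := by
    rw [List.length_flatten, ← List.length_map (f := List.length)]
    exact List.sum_le_card_nsmul _ _ (by simpa using hlen)
  have hi : i < k := hrun i ⟨[], bs.flatten ++ t, by simp⟩
  have htN : t.length < N := hshort t ht (List.suffix_append _ t).isInfix
  refine ⟨bs, fun b hb ↦ ⟨hbs b hb, hlen b hb⟩, hbsl, ?_⟩
  simp only [List.length_append, List.length_replicate]
  lia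

theorem HasPowerOrDivided.of_blocks {x : X} {k d : ℕ} {b₀ : List X} {bs : List (List X)}
    (hbs : ∀ b ∈ b₀ :: bs, IsBlock x b) (hk : 1 ≤ k) (h : HasPowerOrDivided k d bs) :
    HasPowerOrDivided k (d + 1) (b₀ :: bs).flatten := by
  obtain ⟨u, hu, h⟩ | ⟨u, hu, h⟩ := h
  · have hub (b) (hb : b ∈ u) : IsBlock x b := hbs b <| List.mem_cons_of_mem _ <|
      h.subset <| List.mem_flatten.2 ⟨u, List.mem_replicate.2 ⟨by lia, rfl⟩, hb⟩
    obtain ⟨a, s, -, hus⟩ := exists_flatten_eq_cons hub hu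
    refine .inl ⟨u.flatten, by simp [hus], ?_⟩
    rw [← List.map_replicate, ← List.flatten_flatten]
    exact (h.trans (List.suffix_cons b₀ bs).isInfix).flatten
  · obtain ⟨p, s, rfl⟩ := h
    have hub (i) (b) (hb : b ∈ u i) : IsBlock x b := hbs b <| by
      have : b ∈ (List.ofFn u).flatten := List.mem_flatten.2 ⟨u i, List.mem_ofFn.2 ⟨i, rfl⟩, hb⟩
      simp [this]
    have hcons (i) : ∃ a s, a < x ∧ (u i).flatten = a :: s :=
      exists_flatten_eq_cons (hub i) (hu.1 i)
    -- The block just before the divided word ends in the letter `x` that is to be prepended.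
    obtain ⟨q, c, hq⟩ : ∃ q c, b₀ :: p = q ++ [c] :=
      ⟨_, _, (List.dropLast_append_getLast (List.cons_ne_nil b₀ p)).symm⟩
    obtain ⟨c', rfl⟩ : ∃ c', c = c' ++ [x] := (hbs c <| by
      rw [List.append_assoc, ← List.cons_append, hq]; simp).exists_eq_concat
    refine .inr ⟨_, (hu.flatten hub).cons hcons, q.flatten ++ c', s.flatten, ?_⟩
    rw [List.append_assoc p, ← List.cons_append, hq]
    simp [List.ofFn_succ, flatten_ofFn_flatten]

end Blocks

section Shirshov

theorem finite_setOf_forall_mem_and_length_le {X : Type*} (S : Finset X) (n : ℕ) :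
    {l : List X | (∀ a ∈ l, a ∈ S) ∧ l.length ≤ n}.Finite := by
  refine ((List.finite_length_le S n).image (List.map Subtype.val)).subset ?_
  rintro l ⟨hlS, hln⟩
  exact ⟨l.attach.map fun a ↦ ⟨a.1, hlS _ a.2⟩, by simpa using hln, by simp⟩

/- If a word over `insert x S` avoids both patterns, then its factors without `x` and its powers of
`x` are short, so it has many blocks, of which only finitely many different ones occur; the
hypothesis `ihd` applies to it as a word whose letters are blocks. -/
theorem exists_length_hasPowerOrDivided_insert {X : Type*} [LinearOrder X] {k d : ℕ} (hk : 1 ≤ k)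
    (ihd : ∀ T : Finset (List X), ∃ N, ∀ l : List (List X), (∀ b ∈ l, b ∈ T) → N ≤ l.length →
      HasPowerOrDivided k d l)
    {x : X} {S : Finset X} (hx : ∀ a ∈ S, a < x)
    (ihS : ∃ N, ∀ l : List X, (∀ a ∈ l, a ∈ S) → N ≤ l.length → HasPowerOrDivided k (d + 1) l) :
    ∃ N, ∀ l : List X, (∀ a ∈ l, a ∈ insert x S) → N ≤ l.length →
      HasPowerOrDivided k (d + 1) l := by
  obtain ⟨N₁, hN₁⟩ := ihS
  obtain ⟨N₂, hN₂⟩ := ihd (finite_setOf_forall_mem_and_length_le (insert x S) (N₁ + k)).toFinset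
  refine ⟨k + (N₂ + 1) * (N₁ + k) + N₁ + 1, fun l hl hlen ↦ by_contra fun hcon ↦ ?_⟩
  have hshort (v) (hv : ∀ a ∈ v, a < x) (hvl : v <:+: l) : v.length < N₁ := by
    by_contra! hN
    refine hcon ((hN₁ v (fun a ha ↦ ?_) hN).of_isInfix hvl)
    exact (Finset.mem_insert.1 (hl a (hvl.subset ha))).resolve_left (hv a ha).ne
  have hrun (i) (hi : List.replicate i x <:+: l) : i < k := by
    by_contra! hki
    refine hcon (.inl ⟨[x], by simp, .trans ⟨[], List.replicate (i - k) x, ?_⟩ hi⟩)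
    simp [hki]
  have hle (a) (ha : a ∈ l) : a ≤ x := by
    obtain rfl | h := Finset.mem_insert.1 (hl a ha)
    exacts [le_rfl, (hx a h).le]
  obtain ⟨bs, hbs, hbsl, hcount⟩ := exists_blocks_of_bounds hle hshort hrun
  have hbs_length : N₂ + 1 < bs.length := by
    by_contra! h
    have := Nat.mul_le_mul_right (N₁ + k) h
    lia
  obtain ⟨b₀, bs, rfl⟩ := List.exists_cons_of_length_pos (by lia : 0 < bs.length)
  refine hcon ((HasPowerOrDivided.of_blocks (fun b hb ↦ (hbs b hb).1) hk
    (hN₂ bs (fun b hb ↦ ?_) (by simp at hbs_length; lia))).of_isInfix hbsl)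
  have hb' := List.mem_cons_of_mem b₀ hb
  exact (Set.Finite.mem_toFinset _).2
    ⟨fun a ha ↦ hl a (((List.infix_of_mem_flatten hb').trans hbsl).subset ha), (hbs b hb').2⟩

theorem exists_length_hasPowerOrDivided {k : ℕ} (hk : 1 ≤ k) (d : ℕ) {X : Type*} [LinearOrder X]
    (S : Finset X) :
    ∃ N, ∀ l : List X, (∀ a ∈ l, a ∈ S) → N ≤ l.length → HasPowerOrDivided k d l := by
  induction d generalizing X with
  | zero => exact ⟨0, fun l _ _ ↦ .inr ⟨Fin.elim0, ⟨fun i ↦ i.elim0, fun σ hσ ↦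
      (hσ (Subsingleton.elim σ 1)).elim⟩, by simp⟩⟩
  | succ d ihd =>
    induction S using Finset.induction_on_max with
    | empty =>
      refine ⟨1, fun l hl hlen ↦ ?_⟩
      obtain ⟨a, l, rfl⟩ := List.exists_cons_of_length_pos hlen
      simpa using hl a
    | insert x S hx ihS => exact exists_length_hasPowerOrDivided_insert hk ihd hx ihS

end Shirshov

section Finiteness

variable {C A X : Type*} [CommRing C] [Ring A] [Algebra C A]

theorem IsIntegralOfDegreeLE.exists_pow_eq_sum {k : ℕ} {w : A} (h : IsIntegralOfDegreeLE C k w) :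
    ∃ c : ℕ → C, w ^ k = ∑ j ∈ Finset.range k, c j • w ^ j := by
  obtain ⟨g, hg, hgk, hw⟩ := h
  by_cases hg1 : g = 1
  · have : Subsingleton A := subsingleton_of_zero_eq_one (by simpa [hg1] using hw.symm)
    exact ⟨0, Subsingleton.elim _ _⟩
  · refine ⟨(Polynomial.X ^ k %ₘ g).coeff, ?_⟩
    rw [← Polynomial.aeval_eq_sum_range'
        ((Polynomial.natDegree_modByMonic_lt _ hg hg1).trans_le hgk),
      Polynomial.aeval_modByMonic_eq_self_of_root hw, map_pow, Polynomial.aeval_X]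

variable {a : X → A} {M : Submodule C A}

theorem prod_map_mem_of_power [LT X] {k : ℕ} {p u s : List X} (hu : u ≠ [])
    (hint : IsIntegralOfDegreeLE C k (u.map a).prod)
    (hM : ∀ l, List.Shortlex (· < ·) l (p ++ (List.replicate k u).flatten ++ s) →
      (l.map a).prod ∈ M) :
    ((p ++ (List.replicate k u).flatten ++ s).map a).prod ∈ M := by
  have hpow (j : ℕ) : ((p ++ (List.replicate j u).flatten ++ s).map a).prod =
      (p.map a).prod * (u.map a).prod ^ j * (s.map a).prod := by
    simp [List.map_flatten, List.prod_flatten, mul_assoc]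
  obtain ⟨c, hc⟩ := hint.exists_pow_eq_sum
  rw [hpow, hc, Finset.mul_sum, Finset.sum_mul]
  refine M.sum_mem fun j hj ↦ ?_
  rw [mul_smul_comm, smul_mul_assoc, ← hpow]
  refine M.smul_mem _ (hM _ (.of_length_lt ?_))
  have := Nat.mul_lt_mul_of_pos_right (Finset.mem_range.1 hj) (List.length_pos_iff.2 hu)
  simpa

theorem prod_map_mem_of_isDivided [LinearOrder X] {d : ℕ} {α : Equiv.Perm (Fin d) → C}
    (hα : IsMultilinearIdentity A α) (hα1 : α 1 = 1) {p s : List X} {u : Fin d → List X}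
    (hu : IsDivided u)
    (hM : ∀ l, List.Shortlex (· < ·) l (p ++ (List.ofFn u).flatten ++ s) → (l.map a).prod ∈ M) :
    ((p ++ (List.ofFn u).flatten ++ s).map a).prod ∈ M := by
  have hprod (σ : Equiv.Perm (Fin d)) :
      ((p ++ (List.ofFn fun i ↦ u (σ i)).flatten ++ s).map a).prod =
        (p.map a).prod * (List.ofFn fun i ↦ ((u (σ i)).map a).prod).prod * (s.map a).prod := by
    simp [List.map_flatten, List.prod_flatten, List.map_ofFn, Function.comp_def, mul_assoc]
  have hid := hα fun i ↦ ((u i).map a).prod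
  rw [← Finset.add_sum_erase _ _ (Finset.mem_univ 1), hα1, one_smul] at hid
  have hone := hprod 1
  simp only [Equiv.Perm.one_apply] at hid hone
  rw [hone, eq_neg_of_add_eq_zero_left hid, mul_neg, neg_mul, Finset.mul_sum, Finset.sum_mul]
  refine M.neg_mem (M.sum_mem fun σ hσ ↦ ?_)
  rw [mul_smul_comm, smul_mul_assoc, ← hprod]
  refine M.smul_mem _ (hM _ (.of_lex ?_
    ((hu.2 σ (Finset.ne_of_mem_erase hσ)).append p s s).lt))
  simpa using length_flatten_ofFn_comp_perm u σ

theorem span_prod_map_eq_top (ha : Algebra.adjoin C (Set.range a) = ⊤) :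
    Submodule.span C (Set.range fun l : List X ↦ (l.map a).prod) = ⊤ := by
  have hlift : ⇑(FreeMonoid.lift a) = (fun l : List X ↦ (l.map a).prod) ∘ FreeMonoid.toList :=
    funext (FreeMonoid.lift_apply a)
  rw [← Algebra.top_toSubmodule, ← ha, Algebra.adjoin_eq_span, ← FreeMonoid.mrange_lift,
    MonoidHom.coe_mrange, hlift, FreeMonoid.toList.surjective.range_comp]

variable [LinearOrder X] [Finite X]

theorem moduleFinite_of_isIntegralOfDegreeLE_words {k d N : ℕ} (hk : 1 ≤ k)
    (ha : Algebra.adjoin C (Set.range a) = ⊤) {α : Equiv.Perm (Fin d) → C}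
    (hα : IsMultilinearIdentity A α) (hα1 : α 1 = 1)
    (hN : ∀ l : List X, N ≤ l.length → HasPowerOrDivided k d l)
    (hint : ∀ l : List X, l.length ≤ N → IsIntegralOfDegreeLE C k (l.map a).prod) :
    Module.Finite C A := by
  let M : Submodule C A :=
    Submodule.span C ((fun l : List X ↦ (l.map a).prod) '' {l | l.length < N})
  have hM (l : List X) : (l.map a).prod ∈ M := by
    induction l using (List.Shortlex.wf (α := X) wellFounded_lt).induction with
    | _ l ih =>
    obtain hl | hl := lt_or_ge l.length N
    · exact Submodule.subset_span ⟨l, hl, rfl⟩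
    have htake : l.take N <:+: l := (List.take_prefix N l).isInfix
    obtain ⟨u, hu, h⟩ | ⟨u, hu, h⟩ := hN (l.take N) (by simpa using hl)
    · have hule : u.length ≤ N := by
        have hinfix : u <:+: (List.replicate k u).flatten :=
          List.infix_of_mem_flatten (List.mem_replicate.2 ⟨by lia, rfl⟩)
        exact (hinfix.trans h).length_le.trans (List.length_take_le N l)
      obtain ⟨p, s, rfl⟩ := h.trans htake
      exact prod_map_mem_of_power hu (hint u hule) ih
    · obtain ⟨p, s, rfl⟩ := h.trans htake
      exact prod_map_mem_of_isDivided hα hα1 hu ih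
  have hMtop : M = ⊤ := top_unique <| (span_prod_map_eq_top ha).ge.trans <|
    Submodule.span_le.2 (Set.range_subset_iff.2 hM)
  exact ⟨hMtop ▸ Submodule.fg_span ((List.finite_length_lt X N).image _)⟩

end Finiteness

section PolynomialIdentity

universe u v

variable {C : Type u} [CommRing C]

theorem IsCentralExtension.comp_surjective {A B B' R : Type*} [Ring A] [Algebra C A] [Ring B]
    [Algebra C B] [Ring B'] [Algebra C B'] [CommRing R] [Algebra R B'] {ψ : B →ₐ[C] B'}
    (hψ : IsCentralExtension R ψ) {φ : A →ₐ[C] B} (hφ : Function.Surjective φ) :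
    IsCentralExtension R (ψ.comp φ) := by
  rwa [IsCentralExtension, AlgHom.coe_comp, hφ.range_comp]

theorem IsIntegralOfDegreeLE.mono {A : Type*} [Ring A] [Algebra C A] {k k' : ℕ} {w : A}
    (h : IsIntegralOfDegreeLE C k w) (hk : k ≤ k') : IsIntegralOfDegreeLE C k' w :=
  h.imp fun _ ⟨hg, hgk, hw⟩ ↦ ⟨hg, hgk.trans hk, hw⟩

theorem HasNilpotentPrimeInf.of_vandermondePoly_mem {A : Type v} [Ring A] [Algebra C A] {w : A}
    {n : ℕ} (hw : vandermondePoly C n ∈ interlaceIdeal C w n)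
    (h : ∀ (B : Type v) [Ring B] [Algebra C B] (φ : A →ₐ[C] B), Function.Surjective φ →
      ∀ m < n, vandermondePoly C (m + 1) ∈ interlaceIdeal C (φ w) (m + 1) →
        HasNilpotentPrimeInf (IntegralExtension C (φ w) m)) :
    HasNilpotentPrimeInf A := by
  induction n generalizing A with
  | zero =>
    have hone := mem_interlaceIdeal.1 hw Fin.elim0
    rw [vandermondePoly_zero, interlaceEval_one, List.ofFn_zero, List.prod_nil] at hone
    have : Subsingleton A := subsingleton_of_zero_eq_one hone.symm
    exact .of_subsingleton
  | succ n ih =>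
    have hext : HasNilpotentPrimeInf (IntegralExtension C w n) :=
      h A (.id C A) Function.surjective_id n n.lt_succ_self hw
    refine hext.of_ker_of_rightColon (IntegralExtension.isCentralExtension_of w n) ?_
    set J := rightColon ⊥ (TwoSidedIdeal.ker (IntegralExtension.of C w n))
    have hmk : Function.Surjective (J.ringCon.mkₐ C) := RingCon.mkₐ_surjective _
    refine ih (w := J.ringCon.mkₐ C w) (mem_interlaceIdeal.2 fun y ↦ ?_)
      fun B _ _ φ hφ m hm ↦ h B (φ.comp (J.ringCon.mkₐ C)) (hφ.comp hmk) m (by lia)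
    obtain ⟨y, rfl⟩ := hmk.comp_left y
    beta_reduce
    rw [← map_interlaceEval, mkₐ_eq_zero, mem_rightColon]
    exact fun a ha ↦ (TwoSidedIdeal.mem_bot A).2
      (IntegralExtension.mul_interlaceEval_eq_zero ((TwoSidedIdeal.mem_ker _).1 ha) y)

variable {X : Type*} [LinearOrder X] [Finite X] {d N : ℕ}

theorem HasNilpotentPrimeInf.of_isIntegralOfDegreeLE_words {A : Type max u v}
    [IsNoetherianRing C] [Ring A] [Algebra C A]
    (hN : ∀ l : List X, N ≤ l.length → HasPowerOrDivided (d + 1) d l) {a : X → A}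
    (ha : Algebra.adjoin C (Set.range a) = ⊤) {α : Equiv.Perm (Fin d) → C}
    (hα : IsMultilinearIdentity A α) (hα1 : α 1 = 1) (L : Finset (List X))
    (hint : ∀ l : List X, l.length ≤ N → l ∉ L →
      IsIntegralOfDegreeLE C (d + 1) (l.map a).prod) :
    HasNilpotentPrimeInf A := by
  induction L using Finset.induction_on generalizing C A with
  | empty =>
    have := moduleFinite_of_isIntegralOfDegreeLE_words (by lia) ha hα hα1 hN
      fun l hl ↦ hint l hl (Finset.notMem_empty l)
    exact .of_finite C
  | insert u L _ ih =>
    have hV := hα.smul_vandermondePoly_mem (u.map a).prod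
    rw [hα1, one_smul] at hV
    refine .of_vandermondePoly_mem hV fun B _ _ φ hφ m hm hVm ↦ ?_
    set ψ := (IntegralExtension.of C (φ (u.map a).prod) m).comp φ with hψ
    have hψc : IsCentralExtension (MvPolynomial (Fin m) C) ψ :=
      (IntegralExtension.isCentralExtension_of _ m).comp_surjective hφ
    refine ih (a := ψ ∘ a) (hψc.adjoin_range_comp_eq_top ha) (hα.map hψc) (by simp [hα1])
      fun l hl hlL ↦ ?_
    rw [← List.map_map, ← map_list_prod]
    obtain rfl | hlu := eq_or_ne l u
    · exact (IntegralExtension.isIntegralOfDegreeLE_of hVm).mono hm.le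
    · exact (hint l hl (by simp [hlu, hlL])).map

theorem HasNilpotentPrimeInf.of_isMultilinearIdentity {A : Type v} [IsNoetherianRing C]
    [Ring A] [Algebra C A] [hfin : Algebra.FiniteType C A]
    {α : Equiv.Perm (Fin d) → C} (hα : IsMultilinearIdentity A α) (hα1 : α 1 = 1) :
    HasNilpotentPrimeInf A := by
  obtain ⟨S, hS⟩ := hfin.out
  set a : Fin S.card → A := fun i ↦ S.equivFin.symm i
  have ha : Algebra.adjoin C (Set.range a) = ⊤ := by
    rw [← hS, ← Subtype.range_coe (s := (S : Set A))]
    exact congrArg _ (S.equivFin.symm.surjective.range_comp (Subtype.val : S → A))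
  obtain ⟨N, hN⟩ := exists_length_hasPowerOrDivided (Nat.succ_pos d) d
    (Finset.univ : Finset (Fin S.card))
  -- The type `IntegralExtension C w n` lies in the universe of `A` only if that one contains `u`.
  let e : A ≃ₐ[C] ULift.{u} A := ULift.algEquiv.symm
  have he : IsCentralExtension C (e : A →ₐ[C] ULift.{u} A) := .of_surjective e.surjective
  refine HasNilpotentPrimeInf.of_injective (.of_isIntegralOfDegreeLE_words (N := N)
    (fun l ↦ hN l (by simp)) (he.adjoin_range_comp_eq_top ha) (hα.map he) hα1
    (List.finite_length_le _ N).toFinset fun l hl hlL ↦ ?_) he e.injective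
  simp [hl] at hlL

end PolynomialIdentity

section Polarization

open Finset in
theorem sum_neg_one_pow_smul_map_sum_sdiff {R ι κ N : Type*} {M : ι → Type*}
    [Semiring R] [Fintype ι] [Fintype κ] [DecidableEq κ] [DecidableEq ι]
    [∀ i, AddCommMonoid (M i)] [∀ i, Module R (M i)] [AddCommGroup N] [Module R N]
    (F : MultilinearMap R M N) (v : ∀ i, κ → M i) (s : ι → Finset κ) :
    ∑ t : Finset κ, (-1 : ℤ) ^ #t • F (fun i ↦ ∑ k ∈ s i \ t, v i k) =
      ∑ p ∈ Fintype.piFinset s with Function.Surjective p, F fun i ↦ v i (p i) := by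
  have hmem (p : ι → κ) (t : Finset κ) : p ∈ Fintype.piFinset (fun i ↦ s i \ t) ↔
      p ∈ Fintype.piFinset s ∧ t ∈ (univ.image p)ᶜ.powerset := by
    simp only [Fintype.mem_piFinset, mem_sdiff, forall_and, mem_powerset,
      subset_compl_iff_disjoint_left, disjoint_left, mem_image, mem_univ, true_and,
      forall_exists_index, forall_apply_eq_imp_iff]
  simp only [F.map_sum_finset, smul_sum]
  rw [sum_comm' (t' := Fintype.piFinset s) (s' := fun p ↦ (univ.image p)ᶜ.powerset)
    fun t p ↦ by simp [hmem, and_comm], sum_filter]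
  refine sum_congr rfl fun p _ ↦ ?_
  have hsurj : (univ.image p)ᶜ = ∅ ↔ Function.Surjective p := by
    simp [eq_univ_iff_forall, Function.Surjective]
  simp only [← sum_smul, sum_powerset_neg_one_pow_card, hsurj, ite_smul, one_smul, zero_smul]

end Polarization

section Linearization

/-- The noncommutative polynomials, i.e. the elements of the free algebra on `X`, presented so
that they have coefficients indexed by words. -/
abbrev NCPolynomial (C X : Type*) [CommRing C] : Type _ :=
  MonoidAlgebra C (FreeMonoid X)

variable {C X A : Type*} [CommRing C] [Ring A] [Algebra C A]

variable (A) in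
/-- The noncommutative polynomial `f` is a polynomial identity of `A`: all its values vanish. -/
def IsPolynomialIdentity (f : NCPolynomial C X) : Prop :=
  ∀ ψ : NCPolynomial C X →ₐ[C] A, ψ f = 0

open Finset in
theorem sum_neg_one_pow_smul_prod_map_sum [DecidableEq X] {D : ℕ} (u : Fin D → X) (a : Fin D → A)
    {m : List X} (hm : m.length ≤ D) :
    ∑ t : Finset (Fin D), (-1 : ℤ) ^ #t •
        (m.map fun x ↦ ∑ k ∈ ({k | u k = x} : Finset (Fin D)) \ t, a k).prod =
      ∑ σ : Equiv.Perm (Fin D) with (List.ofFn fun i ↦ u (σ i)) = m,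
        (List.ofFn fun i ↦ a (σ i)).prod := by
  have hpol := sum_neg_one_pow_smul_map_sum_sdiff
    (MultilinearMap.mkPiAlgebraFin ℤ m.length A) (fun _ ↦ a) fun i ↦ {k | u k = m.get i}
  simp only [MultilinearMap.mkPiAlgebraFin_apply] at hpol
  conv_lhs => rw [← List.ofFn_get m]
  simp only [List.map_ofFn]
  refine hpol.trans ?_
  rcases hm.lt_or_eq with hlt | rfl
  · rw [sum_eq_zero, sum_eq_zero]
    · intro σ hσ
      have hlen := congrArg List.length (mem_filter.1 hσ).2
      simp only [List.length_ofFn] at hlen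
      exact absurd hlen hlt.ne'
    · intro p hp
      have hcard := Fintype.card_le_of_surjective p (mem_filter.1 hp).2
      simp only [Fintype.card_fin] at hcard
      exact absurd hlt hcard.not_gt
  · symm
    refine sum_of_injOn (fun σ ↦ ⇑σ) (DFunLike.coe_injective.injOn) ?_ ?_ fun _ _ ↦ rfl
    · intro σ hσ
      have hu := List.ofFn_injective ((mem_filter.1 hσ).2.trans (List.ofFn_get m).symm)
      simpa [σ.surjective] using congrFun hu
    · intro p hp hpσ
      obtain ⟨hpm, hps⟩ := mem_filter.1 hp
      have hu : (fun i ↦ u (p i)) = m.get := by simpa [funext_iff] using hpm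
      refine absurd ⟨.ofBijective p hps.bijective_of_finite, ?_, rfl⟩ hpσ
      simp [hu]

open Finset in
theorem IsPolynomialIdentity.isMultilinearIdentity {f : NCPolynomial C X}
    (hf : IsPolynomialIdentity A f) {D : ℕ}
    (hD : ∀ m : FreeMonoid X, D < m.length → ∀ x : A, f.coeff m • x = 0) (u : Fin D → X) :
    IsMultilinearIdentity A fun σ ↦ f.coeff (.ofList (List.ofFn fun i ↦ u (σ i))) := by
  classical
  intro a
  let val (t : Finset (Fin D)) (x : X) : A := ∑ k ∈ ({k | u k = x} : Finset (Fin D)) \ t, a k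
  have hval (t : Finset (Fin D)) :
      ∑ m ∈ f.coeff.support, f.coeff m • (m.toList.map (val t)).prod = 0 := by
    have := hf (MonoidAlgebra.lift C A _ (FreeMonoid.lift (val t)))
    simpa only [MonoidAlgebra.lift_apply, Finsupp.sum, FreeMonoid.lift_apply] using this
  have hsum : ∑ m ∈ f.coeff.support, f.coeff m •
      ∑ t : Finset (Fin D), (-1 : ℤ) ^ #t • (m.toList.map (val t)).prod = 0 := by
    simp only [smul_sum, smul_comm (f.coeff _) (_ : ℤ)]
    rw [sum_comm]
    simp only [← smul_sum, hval, smul_zero, sum_const_zero]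
  have hword : ∀ m ∈ f.coeff.support, f.coeff m •
      ∑ t : Finset (Fin D), (-1 : ℤ) ^ #t • (m.toList.map (val t)).prod =
      ∑ σ : Equiv.Perm (Fin D), if FreeMonoid.ofList (List.ofFn fun i ↦ u (σ i)) = m then
        f.coeff m • (List.ofFn fun i ↦ a (σ i)).prod else 0 := by
    intro m _
    rcases le_or_gt m.length D with hm | hm
    · rw [sum_neg_one_pow_smul_prod_map_sum u a hm, smul_sum, sum_filter]
      exact sum_congr rfl fun σ _ ↦ if_congr Iff.rfl rfl rfl
    · rw [hD m hm]
      simp [hD m hm]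
  rw [sum_congr rfl hword, sum_comm] at hsum
  rw [← hsum]
  refine sum_congr rfl fun σ _ ↦ ?_
  rw [sum_ite_eq]
  split_ifs with hσ
  · rfl
  · beta_reduce
    rw [Finsupp.notMem_support_iff.1 hσ, zero_smul]

end Linearization

section InterlacedWords

open MvPolynomial

variable {X : Type*} {n : ℕ}

theorem toList_of_pow (x : X) (k : ℕ) : (FreeMonoid.of x ^ k).toList = List.replicate k x := by
  induction k with
  | zero => rfl
  | succ k ih => rw [pow_succ', FreeMonoid.toList_of_mul, ih, List.replicate_succ]

theorem toList_interlace_of (x : X) (y : Fin n → X) (k : Fin n → ℕ) :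
    (interlace (FreeMonoid.of x) (FreeMonoid.of ∘ y) k).toList =
      (List.ofFn fun i ↦ List.replicate (k i) x ++ [y i]).flatten := by
  simp [interlace, FreeMonoid.toList_prod, List.map_ofFn, Function.comp_def, toList_of_pow]

theorem length_interlace_of (x : X) (y : Fin n → X) (k : Fin n → ℕ) :
    (interlace (FreeMonoid.of x) (FreeMonoid.of ∘ y) k).length = ∑ i, k i + n := by
  change (interlace (FreeMonoid.of x) (FreeMonoid.of ∘ y) k).toList.length = _
  simp [toList_interlace_of, List.length_flatten, List.map_ofFn, List.sum_ofFn,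
    Finset.sum_add_distrib]

theorem interlace_of_injective {x : X} {y : Fin n → X} (hy : ∀ i, y i ≠ x) :
    Function.Injective (interlace (FreeMonoid.of x) (FreeMonoid.of ∘ y)) := by
  classical
  intro k k' h
  replace h := congrArg FreeMonoid.toList h
  rw [toList_interlace_of, toList_interlace_of] at h
  induction n with
  | zero => exact Subsingleton.elim _ _
  | succ n ih =>
    simp only [List.ofFn_succ, List.flatten_cons, List.append_assoc, List.singleton_append] at h
    have hzero : k 0 = k' 0 := by
      simpa [List.takeWhile_append, List.takeWhile_replicate, hy] using
        congrArg (fun l ↦ (l.takeWhile (· = x)).length) h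
    rw [hzero, List.append_cancel_left_eq] at h
    funext i
    cases i using Fin.cases with
    | zero => exact hzero
    | succ i => exact congrFun (ih (fun i ↦ hy i.succ) (List.cons.inj h).2) i

variable {C : Type*} [CommRing C]

theorem coeff_interlaceEval_of {x : X} {y : Fin n → X} (hy : ∀ i, y i ≠ x)
    (p : MvPolynomial (Fin n) C) (k : Fin n →₀ ℕ) :
    (interlaceEval (MonoidAlgebra.of C _ (FreeMonoid.of x))
      (MonoidAlgebra.of C _ ∘ FreeMonoid.of ∘ y) p).coeff
        (interlace (FreeMonoid.of x) (FreeMonoid.of ∘ y) k) = p.coeff k := by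
  classical
  induction p using MvPolynomial.induction_on' with
  | monomial k' c =>
    rw [interlaceEval_monomial, ← map_interlace]
    simp [MonoidAlgebra.of_apply, Finsupp.single_apply, (interlace_of_injective hy).eq_iff]
  | add p q hp hq => rw [map_add, MonoidAlgebra.coeff_add, Finsupp.add_apply, hp, hq, coeff_add]

theorem length_eq_of_coeff_interlaceEval_of_ne_zero {x : X} {y : Fin n → X}
    {p : MvPolynomial (Fin n) C} {e : ℕ} (hp : p.IsHomogeneous e) {m : FreeMonoid X}
    (hm : (interlaceEval (MonoidAlgebra.of C _ (FreeMonoid.of x))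
      (MonoidAlgebra.of C _ ∘ FreeMonoid.of ∘ y) p).coeff m ≠ 0) :
    m.length = e + n := by
  simp only [interlaceEval_eq_sum, MonoidAlgebra.coeff_sum, Finsupp.finsetSum_apply] at hm
  obtain ⟨k, hk, hkm⟩ := Finset.exists_ne_zero_of_sum_ne_zero hm
  have hdeg : ∑ i, k i = e := by
    rw [← hp (mem_support_iff.1 hk), ← Finsupp.degree_eq_sum, Finsupp.degree_eq_weight_one]
    rfl
  rw [← map_interlace, MonoidAlgebra.of_apply, MonoidAlgebra.smul_single,
    MonoidAlgebra.coeff_single] at hkm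
  obtain ⟨rfl, -⟩ := Finsupp.single_apply_ne_zero.1 hkm
  rw [length_interlace_of, hdeg]

variable {A : Type*} [Ring A] [Algebra C A]

theorem exists_isMultilinearIdentity_of_vandermondePoly_mem
    (h : ∀ w : A, vandermondePoly C n ∈ interlaceIdeal C w n) :
    ∃ (D : ℕ) (α : Equiv.Perm (Fin D) → C), IsMultilinearIdentity A α ∧ α 1 = 1 := by
  let x : FreeMonoid (Option (Fin n)) := .of none
  let y : Fin n → FreeMonoid (Option (Fin n)) := FreeMonoid.of ∘ some
  let f : NCPolynomial C (Option (Fin n)) :=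
    interlaceEval (.of C _ x) (MonoidAlgebra.of C _ ∘ y) (vandermondePoly C n)
  have hf : IsPolynomialIdentity A f := fun ψ ↦ by
    rw [map_interlaceEval]
    exact mem_interlaceIdeal.1 (h _) _
  obtain ⟨k, hk⟩ := exists_coeff_vandermondePoly_eq_one C n
  have hword : f.coeff (interlace x y k) = 1 :=
    (coeff_interlaceEval_of (fun i ↦ Option.some_ne_none i) _ k).trans hk
  cases subsingleton_or_nontrivial C
  · exact ⟨0, 1, fun _ ↦ (Module.subsingleton C A).elim _ _, rfl⟩
  have hlen {m} (hm : f.coeff m ≠ 0) :=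
    length_eq_of_coeff_interlaceEval_of_ne_zero (isHomogeneous_vandermondePoly C n) hm
  refine ⟨_, _, hf.isMultilinearIdentity (fun m hm a ↦ ?_) (interlace x y k).toList.get, ?_⟩
  · by_contra hne
    exact hm.ne' ((hlen (left_ne_zero_of_smul hne)).trans (hlen (hword ▸ one_ne_zero)).symm)
  · simpa using hword

end InterlacedWords

section ScalarMultiples

variable {C : Type*} (A : Type*) [CommRing C] [Ring A] [Algebra C A] (c : C)

/-- The two-sided ideal `cA` of the multiples of the scalar `c`. -/
def smulIdeal : TwoSidedIdeal A :=
  .mk' {x | ∃ z, c • z = x} ⟨0, smul_zero c⟩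
    (fun ⟨y, hy⟩ ⟨z, hz⟩ ↦ ⟨y + z, by rw [smul_add, hy, hz]⟩)
    (fun ⟨z, hz⟩ ↦ ⟨-z, by rw [smul_neg, hz]⟩)
    (fun {x _} ⟨z, hz⟩ ↦ ⟨x * z, by rw [← hz, mul_smul_comm]⟩)
    (fun {_ y} ⟨z, hz⟩ ↦ ⟨z * y, by rw [← hz, smul_mul_assoc]⟩)

variable {A c}

theorem mem_smulIdeal {x : A} : x ∈ smulIdeal A c ↔ ∃ z, c • z = x := by
  rw [smulIdeal, TwoSidedIdeal.mem_mk']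
  rfl

theorem mem_rightColon_smulIdeal {y : A} : y ∈ rightColon ⊥ (smulIdeal A c) ↔ c • y = 0 := by
  simp only [mem_rightColon, mem_smulIdeal, TwoSidedIdeal.mem_bot, forall_exists_index,
    forall_apply_eq_imp_iff, smul_mul_assoc]
  refine ⟨fun h ↦ by simpa using h 1, fun h z ↦ ?_⟩
  rw [← mul_smul_comm, h, mul_zero]

variable (c) in
theorem HasNilpotentPrimeInf.of_smulIdeal
    (h : HasNilpotentPrimeInf (smulIdeal A c).ringCon.Quotient)
    (h' : HasNilpotentPrimeInf (rightColon ⊥ (smulIdeal A c)).ringCon.Quotient) :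
    HasNilpotentPrimeInf A := by
  refine h.of_ker_of_rightColon (.mkₐ (C := C) (smulIdeal A c)) ?_
  rwa [show TwoSidedIdeal.ker ((smulIdeal A c).ringCon.mkₐ C) = smulIdeal A c from
    SetLike.ext fun _ ↦ (TwoSidedIdeal.mem_ker _).trans (mkₐ_eq_zero (C := C))]

theorem annihilator_lt_annihilator_quotient (hc : c ∉ Module.annihilator C A)
    {I : TwoSidedIdeal A} (hI : ∀ x : A, c • x ∈ I) :
    Module.annihilator C A < Module.annihilator C I.ringCon.Quotient := by
  refine lt_of_le_of_ne (LinearMap.annihilator_le_of_surjective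
    (I.ringCon.mkₐ C).toLinearMap (RingCon.mkₐ_surjective (α := C) _)) fun h ↦ hc (h ▸ ?_)
  refine Module.mem_annihilator.2 fun z ↦ ?_
  obtain ⟨x, rfl⟩ := RingCon.mkₐ_surjective (α := C) _ z
  rw [← map_smul, mkₐ_eq_zero]
  exact hI x

end ScalarMultiples

section RelativelyFree

variable {C X A : Type*} [CommRing C] [Ring A] [Algebra C A]

theorem exists_algHom_comp_eq {B : Type*} [Ring B] [Algebra C B] {φ : A →ₐ[C] B}
    (hφ : Function.Surjective φ) (ψ : NCPolynomial C X →ₐ[C] B) :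
    ∃ ψ' : NCPolynomial C X →ₐ[C] A, φ.comp ψ' = ψ := by
  choose v hv using fun x ↦ hφ (ψ (MonoidAlgebra.of C _ (FreeMonoid.of x)))
  refine ⟨MonoidAlgebra.lift C A _ (FreeMonoid.lift v), ?_⟩
  refine (MonoidAlgebra.lift C B _).symm.injective (FreeMonoid.hom_eq fun x ↦ ?_)
  simpa using hv x

/-- The algebra `A` is relatively free, with presentation `π`: every relation among the generators
`π x` is a polynomial identity of `A`. -/
structure IsRelativelyFree (π : NCPolynomial C X →ₐ[C] A) : Prop where
  surjective : Function.Surjective π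
  isPolynomialIdentity {f : NCPolynomial C X} : π f = 0 → IsPolynomialIdentity A f

variable {π : NCPolynomial C X →ₐ[C] A}

theorem IsRelativelyFree.mkₐ_comp (h : IsRelativelyFree π) {I : TwoSidedIdeal A}
    (hI : ∀ f, π f ∈ I → ∀ ψ : NCPolynomial C X →ₐ[C] A, ψ f ∈ I) :
    IsRelativelyFree ((I.ringCon.mkₐ C).comp π) where
  surjective := (RingCon.mkₐ_surjective (α := C) _).comp h.surjective
  isPolynomialIdentity {f} hf ψ := by
    obtain ⟨ψ, rfl⟩ := exists_algHom_comp_eq (φ := I.ringCon.mkₐ C) (RingCon.mkₐ_surjective _) ψ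
    rw [AlgHom.comp_apply, mkₐ_eq_zero] at hf ⊢
    exact hI f hf ψ

theorem IsRelativelyFree.mkₐ_smulIdeal_comp (h : IsRelativelyFree π) (c : C) :
    IsRelativelyFree (((smulIdeal A c).ringCon.mkₐ C).comp π) := by
  refine h.mkₐ_comp fun f hf ψ ↦ ?_
  obtain ⟨z, hz⟩ := mem_smulIdeal.1 hf
  obtain ⟨g, rfl⟩ := h.surjective z
  have hfg : π (c • g - f) = 0 := by rw [map_sub, map_smul, hz, sub_self]
  have hψ := h.isPolynomialIdentity hfg ψ
  rw [map_sub, map_smul, sub_eq_zero] at hψ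
  exact mem_smulIdeal.2 ⟨ψ g, hψ⟩

theorem IsRelativelyFree.mkₐ_rightColon_smulIdeal_comp (h : IsRelativelyFree π) (c : C) :
    IsRelativelyFree (((rightColon ⊥ (smulIdeal A c)).ringCon.mkₐ C).comp π) := by
  refine h.mkₐ_comp fun f hf ψ ↦ ?_
  rw [mem_rightColon_smulIdeal, ← map_smul] at hf ⊢
  exact h.isPolynomialIdentity hf ψ

theorem HasNilpotentPrimeInf.of_forall_coeff_mem (hπ : Function.Surjective π)
    (hA : (Module.annihilator C A).IsPrime)
    (hf : ∀ f, π f = 0 → ∀ m, f.coeff m ∈ Module.annihilator C A) : HasNilpotentPrimeInf A := by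
  let q := MonoidAlgebra.mapRingHom (FreeMonoid X) (Ideal.Quotient.mk (Module.annihilator C A))
  have hq (f : NCPolynomial C X) : q f = 0 ↔ ∀ m, f.coeff m ∈ Module.annihilator C A := by
    rw [MonoidAlgebra.ext_iff, Finsupp.ext_iff]
    simp [q, Ideal.Quotient.eq_zero_iff_mem]
  have hπq (f : NCPolynomial C X) : π f = 0 ↔ q f = 0 := by
    refine ⟨fun h ↦ (hq f).2 (hf f h), fun h ↦ ?_⟩
    rw [← (MonoidAlgebra.lift C A _).apply_symm_apply π, MonoidAlgebra.lift_apply]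
    exact Finset.sum_eq_zero fun m _ ↦ Module.mem_annihilator.1 ((hq f).1 h m) _
  have : NoZeroDivisors A := ⟨fun {x y} hxy ↦ by
    obtain ⟨f, rfl⟩ := hπ x
    obtain ⟨g, rfl⟩ := hπ y
    rw [← map_mul, hπq, map_mul, mul_eq_zero] at hxy
    rwa [hπq, hπq]⟩
  exact .of_noZeroDivisors

theorem IsPolynomialIdentity.exists_isMultilinearIdentity {f : NCPolynomial C X}
    (hf : IsPolynomialIdentity A f) {m : FreeMonoid X}
    (hm : f.coeff m ∉ Module.annihilator C A) :
    ∃ (D : ℕ) (α : Equiv.Perm (Fin D) → C),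
      IsMultilinearIdentity A α ∧ α 1 ∉ Module.annihilator C A := by
  classical
  have hsupp {m} (hm : f.coeff m ∉ Module.annihilator C A) : m ∈ f.coeff.support :=
    Finsupp.mem_support_iff.2 fun h ↦ hm (h ▸ zero_mem _)
  obtain ⟨m₀, hm₀, hmax⟩ := Finset.exists_max_image
    ({m ∈ f.coeff.support | f.coeff m ∉ Module.annihilator C A}) FreeMonoid.length
    ⟨m, Finset.mem_filter.2 ⟨hsupp hm, hm⟩⟩
  refine ⟨_, _, hf.isMultilinearIdentity (fun m hlen ↦ ?_) m₀.toList.get, ?_⟩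
  · by_contra hne
    have hm := mt Module.mem_annihilator.1 hne
    exact hlen.not_ge (hmax m (Finset.mem_filter.2 ⟨hsupp hm, hm⟩))
  · simpa using (Finset.mem_filter.1 hm₀).2

theorem IsMultilinearIdentity.hasNilpotentPrimeInf_rightColon_smulIdeal [IsNoetherianRing C]
    [Algebra.FiniteType C A] {d : ℕ} {α : Equiv.Perm (Fin d) → C}
    (hα : IsMultilinearIdentity A α) :
    HasNilpotentPrimeInf (rightColon ⊥ (smulIdeal A (α 1))).ringCon.Quotient := by
  set K := rightColon ⊥ (smulIdeal A (α 1))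
  have hmk : Function.Surjective (K.ringCon.mkₐ C) := RingCon.mkₐ_surjective _
  have hV (w : K.ringCon.Quotient) :
      vandermondePoly C (d + 1) ∈ interlaceIdeal C w (d + 1) := by
    obtain ⟨w, rfl⟩ := hmk w
    refine mem_interlaceIdeal.2 fun y ↦ ?_
    obtain ⟨y, rfl⟩ := hmk.comp_left y
    beta_reduce
    rw [← map_interlaceEval, mkₐ_eq_zero, mem_rightColon_smulIdeal, ← map_smul]
    exact mem_interlaceIdeal.1 (hα.smul_vandermondePoly_mem w) y
  obtain ⟨D, β, hβ, hβ1⟩ := exists_isMultilinearIdentity_of_vandermondePoly_mem hV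
  have := Algebra.FiniteType.of_surjective _ hmk
  exact .of_isMultilinearIdentity hβ hβ1

theorem IsRelativelyFree.hasNilpotentPrimeInf [IsNoetherianRing C] [Finite X]
    (h : IsRelativelyFree π) : HasNilpotentPrimeInf A := by
  induction hJ : Module.annihilator C A using WellFoundedGT.induction generalizing A with
  | ind J ih =>
  subst hJ
  have hsmul {c : C} (hc : c ∉ Module.annihilator C A) :
      HasNilpotentPrimeInf (smulIdeal A c).ringCon.Quotient :=
    ih _ (annihilator_lt_annihilator_quotient hc fun x ↦ mem_smulIdeal.2 ⟨x, rfl⟩)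
      (h.mkₐ_smulIdeal_comp c) rfl
  by_cases hA : (Module.annihilator C A).IsPrime
  · by_cases! hf : ∀ f, π f = 0 → ∀ m, f.coeff m ∈ Module.annihilator C A
    · exact .of_forall_coeff_mem h.surjective hA hf
    · obtain ⟨f, hf, m, hm⟩ := hf
      obtain ⟨D, α, hα, hα1⟩ := (h.isPolynomialIdentity hf).exists_isMultilinearIdentity hm
      have := Algebra.FiniteType.of_surjective π h.surjective
      exact .of_smulIdeal (α 1) (hsmul hα1) hα.hasNilpotentPrimeInf_rightColon_smulIdeal
  · rcases Ideal.not_isPrime_iff.1 hA with htop | ⟨c, hc, d, hd, hcd⟩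
    · have := Module.annihilator_eq_top_iff.1 htop
      exact .of_subsingleton
    · refine .of_smulIdeal c (hsmul hc) (ih _ (annihilator_lt_annihilator_quotient hd fun x ↦ ?_)
        (h.mkₐ_rightColon_smulIdeal_comp c) rfl)
      rw [mem_rightColon_smulIdeal, smul_smul]
      exact Module.mem_annihilator.1 hcd x

theorem isRelativelyFree_comp_equivMonoidAlgebraFreeMonoid_symm {π : FreeAlgebra C X →ₐ[C] A}
    (hsurj : Function.Surjective π)
    (hker : ∀ (φ : FreeAlgebra C X →ₐ[C] FreeAlgebra C X) (x : FreeAlgebra C X),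
      π x = 0 → π (φ x) = 0) :
    IsRelativelyFree
      (π.comp (FreeAlgebra.equivMonoidAlgebraFreeMonoid (R := C) (X := X)).symm.toAlgHom) where
  surjective := hsurj.comp FreeAlgebra.equivMonoidAlgebraFreeMonoid.symm.surjective
  isPolynomialIdentity {f} hf ψ := by
    obtain ⟨ψ, rfl⟩ := exists_algHom_comp_eq hsurj ψ
    simpa using hker (ψ.comp FreeAlgebra.equivMonoidAlgebraFreeMonoid.toAlgHom) _ hf

end RelativelyFree

end TRadical

/-- Let `A` be the relatively free affine algebra `FreeAlgebra C (Fin ℓ) / I` for a T-ideal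
`I` over a commutative Noetherian ring `C`; here `A` is presented as a `C`-algebra together
with a surjective `C`-algebra homomorphism `π` from the free algebra whose kernel (the
T-ideal `I`) is stable under all endomorphisms of the free algebra.  Then the T-radical of
`A` is the intersection of finitely many T-prime T-ideals: there are `k ≥ 1` T-prime
T-ideals `P 1, …, P k` whose intersection is a nilpotent T-ideal containing every
nilpotent T-ideal of `A`. -/
theorem stmt19 (C : Type*) [CommRing C] [IsNoetherianRing C] (ℓ : ℕ)
    (A : Type*) [Ring A] [Algebra C A]
    (π : FreeAlgebra C (Fin ℓ) →ₐ[C] A) (hsurj : Function.Surjective π)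
    (hker : ∀ (φ : FreeAlgebra C (Fin ℓ) →ₐ[C] FreeAlgebra C (Fin ℓ))
      (x : FreeAlgebra C (Fin ℓ)), π x = 0 → π (φ x) = 0) :
    ∃ k : ℕ, 1 ≤ k ∧ ∃ P : Fin k → TwoSidedIdeal A,
      (∀ i, IsTIdeal C A (P i) ∧ IsTPrime C A (P i)) ∧
      IsTIdeal C A (⨅ i, P i) ∧
      IsNilpotentTwoSidedIdeal (⨅ i, P i) ∧
      ∀ N : TwoSidedIdeal A, IsTIdeal C A N → IsNilpotentTwoSidedIdeal N →
        N ≤ ⨅ i, P i := by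
  have hfree := TRadical.isRelativelyFree_comp_equivMonoidAlgebraFreeMonoid_symm hsurj hker
  exact hfree.hasNilpotentPrimeInf.exists_tPrimes
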